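/- Full abstraction of HOcore w.r.t. normal-form bisimilarity of the call-by-value lambda-calculus: for all open call-by-value lambda-terms t and s, t ~nf s if and only if there exists n > max(fv(t) ∪ fv(s)) such that [[<t | [] | n>_ev]] and [[<s | [] | n>_ev]] are barbed equivalent w.r.t. H. -/

import Mathlib

/-! ### HOcore: syntax, LTS, barbs, barbed bisimilarity -/

/-- Channel names of HOcore. -/
abbrev Name := ℕ

/-- HOcore processes, with de Bruijn indices for process variables. -/
inductive Proc : Type
  | nil : Proc
  | pvar : ℕ → Proc
  | par : Proc → Proc → Proc
  | inp : Name → Proc → Proc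
  | out : Name → Proc → Proc
  deriving DecidableEq

namespace Proc

/-- Shift the free de Bruijn indices `≥ k` by `d`. -/
def lift (d : ℕ) : ℕ → Proc → Proc
  | _, nil => nil
  | k, pvar n => if n < k then pvar n else pvar (n + d)
  | k, par P Q => par (lift d k P) (lift d k Q)
  | k, inp a P => inp a (lift d (k + 1) P)
  | k, out a P => out a (lift d k P)

/-- Capture-avoiding substitution of `S` for the de Bruijn index `k` in `P`. -/
def subst : Proc → ℕ → Proc → Proc
  | nil, _, _ => nil
  | pvar n, k, S => if n = k then lift k 0 S else if k < n then pvar (n - 1) else pvar n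
  | par P Q, k, S => par (subst P k S) (subst Q k S)
  | inp a P, k, S => inp a (subst P (k + 1) S)
  | out a P, k, S => out a (subst P k S)

/-- Free channel names of a process. -/
def fnames : Proc → Finset Name
  | nil => ∅
  | pvar _ => ∅
  | par P Q => fnames P ∪ fnames Q
  | inp a P => insert a (fnames P)
  | out a P => insert a (fnames P)

end Proc

/-- Labels of the HOcore LTS: internal step, output, input. -/
inductive Label
  | tau : Label
  | outl : Name → Proc → Label
  | inl : Name → Proc → Label

/-- Structural congruence: parallel composition is associative, commutative,
and has `nil` as a neutral element. -/
inductive SCong : Proc → Proc → Prop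
  | refl (P) : SCong P P
  | symm {P Q} : SCong P Q → SCong Q P
  | trans {P Q R} : SCong P Q → SCong Q R → SCong P R
  | parComm (P Q) : SCong (.par P Q) (.par Q P)
  | parAssoc (P Q R) : SCong (.par (.par P Q) R) (.par P (.par Q R))
  | parNil (P) : SCong (.par P .nil) P
  | parCong {P P' Q Q'} : SCong P P' → SCong Q Q' → SCong (.par P Q) (.par P' Q')
  | inpCong {P P'} (a) : SCong P P' → SCong (.inp a P) (.inp a P')
  | outCong {P P'} (a) : SCong P P' → SCong (.out a P) (.out a P')

/-- The labeled transition system of HOcore (processes are considered up to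
structural congruence). -/
inductive Step : Proc → Label → Proc → Prop
  | outS (a P) : Step (.out a P) (.outl a P) .nil
  | inpS (a Q P) : Step (.inp a Q) (.inl a P) (Q.subst 0 P)
  | parL {P l P'} (Q) : Step P l P' → Step (.par P Q) l (.par P' Q)
  | parR {Q l Q'} (P) : Step Q l Q' → Step (.par P Q) l (.par P Q')
  | comm1 {P Q P' Q' a R} : Step P (.outl a R) P' → Step Q (.inl a R) Q' →
      Step (.par P Q) .tau (.par P' Q')
  | comm2 {P Q P' Q' a R} : Step P (.inl a R) P' → Step Q (.outl a R) Q' →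
      Step (.par P Q) .tau (.par P' Q')
  | struct {P P' l Q Q'} : SCong P P' → Step P' l Q' → SCong Q' Q → Step P l Q

/-- One internal step. -/
def TauStep (P Q : Proc) : Prop := Step P Label.tau Q

/-- Weak internal transition `==tau==>`. -/
def WTau : Proc → Proc → Prop := Relation.ReflTransGen TauStep

/-- Observables: input on a name, or output on a name (a coname). -/
inductive Barb
  | inb : Name → Barb
  | outb : Name → Barb
  deriving DecidableEq

/-- Strong observable action w.r.t. a set `H` of hidden names. -/
def StrongBarb (H : Set Name) (P : Proc) : Barb → Prop
  | .inb a => a ∉ H ∧ ∃ Q R, Step P (Label.inl a Q) R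
  | .outb a => a ∉ H ∧ ∃ Q R, Step P (Label.outl a Q) R

/-- Weak observable action w.r.t. a set `H` of hidden names. -/
def WeakBarb (H : Set Name) (P : Proc) (α : Barb) : Prop :=
  ∃ P', WTau P P' ∧ StrongBarb H P' α

/-- Barbed bisimulation w.r.t. the hidden names `H`. -/
def IsBarbedBisim (H : Set Name) (R : Proc → Proc → Prop) : Prop :=
  Symmetric R ∧ ∀ P Q, R P Q →
    (∀ α, StrongBarb H P α → WeakBarb H Q α) ∧
    (∀ S : Proc, ((S.fnames : Set Name) ∩ H = ∅) → R (.par P S) (.par Q S)) ∧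
    (∀ P', Step P Label.tau P' → ∃ Q', WTau Q Q' ∧ R P' Q')

/-- Barbed equivalence w.r.t. the hidden names `H`. -/
def BarbedEquiv (H : Set Name) (P Q : Proc) : Prop :=
  ∃ R, IsBarbedBisim H R ∧ R P Q
/-! ### The open call-by-value lambda-calculus and the CK machine -/

/-- Call-by-value lambda-terms: free variables `fvar f` (natural numbers) and
bound variables in de Bruijn representation. -/
inductive CTm
  | fvar : ℕ → CTm
  | bvar : ℕ → CTm
  | lam : CTm → CTm
  | app : CTm → CTm → CTm
  deriving DecidableEq

namespace CTm

/-- Shift the de Bruijn indices `≥ k` by `d`. -/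
def liftC (d : ℕ) : ℕ → CTm → CTm
  | _, fvar f => fvar f
  | k, bvar n => if n < k then bvar n else bvar (n + d)
  | k, lam t => lam (liftC d (k + 1) t)
  | k, app t s => app (liftC d k t) (liftC d k s)

/-- Capture-avoiding substitution of `s` for the de Bruijn index `k`. -/
def substC : CTm → ℕ → CTm → CTm
  | fvar f, _, _ => fvar f
  | bvar n, k, s => if n = k then liftC k 0 s else if k < n then bvar (n - 1) else bvar n
  | lam t, k, s => lam (substC t (k + 1) s)
  | app t u, k, s => app (substC t k s) (substC u k s)

end CTm

/-- Free variables of a term. -/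
def fvC : CTm → Finset ℕ
  | .fvar f => {f}
  | .bvar _ => ∅
  | .lam t => fvC t
  | .app t s => fvC t ∪ fvC s

/-- Values: free variables, variables, and lambda-abstractions. -/
def CIsVal : CTm → Prop
  | .app _ _ => False
  | _ => True

/-- Stack items: an argument `arg(t)` or an already evaluated function `fun(v)`. -/
inductive CItem
  | argI : CTm → CItem
  | funI : CTm → CItem

/-- Stacks of the CK machine. -/
abbrev CStack := List CItem

def fvItem : CItem → Finset ℕ
  | .argI t => fvC t
  | .funI v => fvC v

def fvSt : CStack → Finset ℕ
  | [] => ∅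
  | i :: π => fvItem i ∪ fvSt π

/-- Configurations of the CK machine: evaluation mode `<t | π>` and
continuation mode `<π | v>`. -/
inductive CKConf
  | ev : CTm → CStack → CKConf
  | cont : CStack → CTm → CKConf

/-- Transitions of the CK machine. -/
inductive CKStep : CKConf → CKConf → Prop
  | fn {t s π} : CKStep (.ev (.app t s) π) (.ev t (.argI s :: π))
  | switch {v π} : CIsVal v → CKStep (.ev v π) (.cont π v)
  | arg {t π v} : CKStep (.cont (.argI t :: π) v) (.ev t (.funI v :: π))
  | beta {t π v} : CKStep (.cont (.funI (.lam t) :: π) v) (.ev (t.substC 0 v) π)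

/-- Reflexive-transitive closure of CK transitions. -/
def CKSteps : CKConf → CKConf → Prop := Relation.ReflTransGen CKStep

/-! ### Call-by-value normal-form bisimilarity -/

/-- Call-by-value normal-form bisimulation, on CK configurations. -/
def IsNFBisimV (R : CKConf → CKConf → Prop) : Prop :=
  Symmetric R ∧ ∀ C C', R C C' →
    (∀ v, CKSteps C (.cont [] v) →
      ∃ v', CKSteps C' (.cont [] v') ∧
        ∀ f, f ∉ fvC v ∪ fvC v' →
          R (.cont [.funI v] (.fvar f)) (.cont [.funI v'] (.fvar f))) ∧
    (∀ f π v, CKSteps C (.cont (.funI (.fvar f) :: π) v) →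
      ∃ π' v', CKSteps C' (.cont (.funI (.fvar f) :: π') v') ∧
        ∀ f', f' ∉ fvC v ∪ fvC v' ∪ fvSt π ∪ fvSt π' →
          R (.cont [.funI v] (.fvar f')) (.cont [.funI v'] (.fvar f')) ∧
          R (.cont π (.fvar f')) (.cont π' (.fvar f')))

/-- Call-by-value normal-form bisimilarity. -/
def NFBisimV (C C' : CKConf) : Prop := ∃ R, IsNFBisimV R ∧ R C C'

/-! ### The call-by-value NFB machine -/

/-- Flags of the call-by-value NFB machine. -/
inductive CNFlag
  | flam | fval | fctx
  | fvarF : ℕ → CNFlag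
  deriving DecidableEq

/-- Labels of the call-by-value NFB machine. -/
inductive CNLabel
  | tau : CNLabel
  | flag : CNFlag → CNLabel

/-- Configurations of the call-by-value NFB machine; the `stuck` mode is the
intermediate state between the two flags of the `Stuck-Val` and `Stuck-Context`
steps. -/
inductive CNConf
  | ev : CTm → CStack → ℕ → CNConf
  | cont : CStack → CTm → ℕ → CNConf
  | stuck : CStack → CTm → ℕ → CNConf

/-- Transitions of the call-by-value NFB machine. -/
inductive CNStep : CNConf → CNLabel → CNConf → Prop
  | fn {t s π n} : CNStep (.ev (.app t s) π n) .tau (.ev t (.argI s :: π) n)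
  | switch {v π n} : CIsVal v → CNStep (.ev v π n) .tau (.cont π v n)
  | arg {t π v n} : CNStep (.cont (.argI t :: π) v n) .tau (.ev t (.funI v :: π) n)
  | beta {t π v n} :
      CNStep (.cont (.funI (.lam t) :: π) v n) .tau (.ev (t.substC 0 v) π n)
  | val {v n} : CNStep (.cont [] v n) (.flag .flam) (.cont [.funI v] (.fvar n) (n + 1))
  | stuckFlag {f π v n} :
      CNStep (.cont (.funI (.fvar f) :: π) v n) (.flag (.fvarF f)) (.stuck π v n)
  | stuckVal {π v n} :
      CNStep (.stuck π v n) (.flag .fval) (.cont [.funI v] (.fvar n) (n + 1))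
  | stuckCtx {π v n} :
      CNStep (.stuck π v n) (.flag .fctx) (.cont π (.fvar n) (n + 1))

/-- Silent transitions of the call-by-value NFB machine. -/
def CNTau (C C' : CNConf) : Prop := CNStep C .tau C'

/-- Flagged transitions of the call-by-value NFB machine. -/
def CNFlagStep (C : CNConf) (F : CNFlag) (C' : CNConf) : Prop := CNStep C (.flag F) C'

/-- The call-by-value NFB machine has no terminating flagged transitions. -/
def CNFinal : CNConf → CNFlag → Prop := fun _ _ => False

/-! ### Translation of the call-by-value NFB machine into HOcore -/

def cN : Name := 0
def val0N : Name := 1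
def bN : Name := 2
def kN : Name := 3
def sucN : Name := 4
def zN : Name := 5
def chN : Name := 6
def lamF : Name := 7
def valF : Name := 8
def ctxF : Name := 9

/-- Translation of the empty stack: `[[ [] ]] = b(x).x`. -/
def trMtV : Proc := .inp bN (.pvar 0)

/-- `Fun(P, Q) = P || c!<Q>`. -/
def FunP (P Q : Proc) : Proc := .par P (.out cN Q)

/-- `Arg(P, Q) = val0(x).b(_).(P || c!<Fun(x, Q)>)`. -/
def ArgV (P Q : Proc) : Proc :=
  .inp val0N (.inp bN (.par (P.lift 2 0) (.out cN (FunP (.pvar 1) (Q.lift 2 0)))))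

/-- `Restart = lam(_).val0(x).k(y).(Fun(x, [[ [] ]]) || val0!<y> || k!<suc(_).y> || b!<0>)`. -/
def RestartV : Proc :=
  .inp lamF (.inp val0N (.inp kN (.par (FunP (.pvar 1) trMtV)
    (.par (.out val0N (.pvar 0))
      (.par (.out kN (.inp sucN (.pvar 1))) (.out bN .nil))))))

/-- Internal choice `P + Q = ch!<P> || ch!<Q> || ch(x).ch(_).x`. -/
def choicePlus (P Q : Proc) : Proc :=
  .par (.out chN P) (.par (.out chN Q) (.inp chN (.inp chN (.pvar 1))))

/-- `Choice(Pv, Pπ, Pn) = val(_).(Fun(Pv, [[ [] ]]) || val0!<Pn> || k!<suc(_).Pn>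
|| b!<Restart>) + ctx(_).(Pπ || val0!<Pn> || k!<suc(_).Pn> || b!<Restart>)`. -/
def ChoiceV (Pv Pπ Pn : Proc) : Proc :=
  choicePlus
    (.inp valF (.par (FunP (Pv.lift 1 0) trMtV)
      (.par (.out val0N (Pn.lift 1 0))
        (.par (.out kN (.inp sucN (Pn.lift 2 0))) (.out bN RestartV)))))
    (.inp ctxF (.par (Pπ.lift 1 0)
      (.par (.out val0N (Pn.lift 1 0))
        (.par (.out kN (.inp sucN (Pn.lift 2 0))) (.out bN RestartV)))))

/-- Translation `<<f>>` of a free variable (also used for the counter):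
`<<0>> = z(_).val0(x).c(p).k(y).b(_).Choice(x, p, y)` and `<<f+1>> = suc(_).<<f>>`. -/
def trFVV : ℕ → Proc
  | 0 => .inp zN (.inp val0N (.inp cN (.inp kN (.inp bN
      (ChoiceV (.pvar 3) (.pvar 2) (.pvar 1))))))
  | f + 1 => .inp sucN (trFVV f)

/-- Translation `[[t]]` of terms. -/
def trCV : CTm → Proc
  | .fvar f =>
      .inp cN (.par (.pvar 0)
        (.par (.out val0N ((trFVV f).lift 1 0)) (.out bN RestartV)))
  | .bvar n =>
      .inp cN (.par (.pvar 0) (.par (.out val0N (.pvar (n + 1))) (.out bN RestartV)))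
  | .lam t =>
      .inp cN (.par (.pvar 0)
        (.par (.out val0N ((Proc.inp val0N (.inp bN ((trCV t).lift 1 0))).lift 1 0))
          (.out bN RestartV)))
  | .app t s =>
      .inp cN (.par ((trCV t).lift 1 0) (.out cN (ArgV ((trCV s).lift 1 0) (.pvar 0))))

/-- Translation `(v)` of values. -/
def trVV : CTm → Proc
  | .fvar f => trFVV f
  | .bvar n => .pvar n
  | .lam t => .inp val0N (.inp bN ((trCV t).lift 1 0))
  | .app _ _ => .nil

/-- Translation of stacks. -/
def trStV : CStack → Proc
  | [] => trMtV
  | .argI t :: π => ArgV (trCV t) (trStV π)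
  | .funI v :: π => FunP (trVV v) (trStV π)

/-- Translation `[[<t | π | n>_ev]]` of evaluation-mode configurations. -/
def trEvV (t : CTm) (π : CStack) (n : ℕ) : Proc :=
  .par (trCV t) (.par (.out cN (trStV π)) (.out kN (trFVV n)))

/-- The hidden names: names of the translation that are not flag names
(the flag names being `lam`, `val`, `ctx`, `suc`, `z`). -/
def HSetV : Set Name := {cN, val0N, bN, kN, chN}

/-!
Modulo structural congruence a process is a multiset of messages and receivers. The translation of
a machine state is such a soup in which, up to internal communications that are the only possible
step and go through hidden names, each transition mirrors a transition of the NFB machine. Two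
facts turn this into full abstraction with respect to weak bisimilarity of the machine. A context
avoiding the hidden names can interact with a translated state only through the input on the flag
that the state is raising, so weak bisimilarity is preserved by all such contexts. Conversely, a
context that offers an output on one flag observes whether that flag is consumed, which makes
barbed equivalence a weak bisimulation.

Weak bisimilarity of the machine agrees with normal-form bisimilarity: the machine announces the
head variable of a stuck application in unary and then tests either its argument or its context
on the variable given by the counter. Normal-form bisimulations test on every fresh variable;
since the CK machine commutes with permutations of free variables, one fresh variable is enough.
-/

open Relation

theorem exists_reflTransGen_of_simulation {α β : Type*} {r : α → α → Prop} {s : β → β → Prop}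
    {E : α → β → Prop}
    (sim : ∀ {a a' b}, E a b → r a a' → ∃ b', ReflTransGen s b b' ∧ E a' b')
    {a a' : α} {b : β} (hab : E a b) (haa' : ReflTransGen r a a') :
    ∃ b', ReflTransGen s b b' ∧ E a' b' := by
  induction haa' with
  | refl => exact ⟨b, .refl, hab⟩
  | tail _ hstep ih =>
    obtain ⟨b₁, hb₁, hE₁⟩ := ih
    obtain ⟨b₂, hb₂, hE₂⟩ := sim hE₁ hstep
    exact ⟨b₂, hb₁.trans hb₂, hE₂⟩

theorem add_eq_singleton_add {α : Type*} {m m' t : Multiset α} {c : α} (h : m + m' = {c} + t) :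
    (∃ u, m = {c} + u ∧ t = u + m') ∨ (∃ u, m' = {c} + u ∧ t = m + u) := by
  have hmem : c ∈ m + m' := h ▸ by simp
  rcases Multiset.mem_add.1 hmem with hc | hc
  · obtain ⟨u, rfl⟩ := Multiset.exists_cons_of_mem hc
    rw [← Multiset.singleton_add, add_assoc] at h
    exact .inl ⟨u, rfl, (add_left_cancel h).symm⟩
  · obtain ⟨u, rfl⟩ := Multiset.exists_cons_of_mem hc
    rw [← Multiset.singleton_add, add_left_comm] at h
    exact .inr ⟨u, rfl, (add_left_cancel h).symm⟩

theorem singleton_eq_singleton_add {α : Type*} {t : Multiset α} {c d : α} (h : {d} = {c} + t) :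
    d = c ∧ t = 0 := by
  obtain rfl : c = d := Multiset.mem_singleton.1 (h ▸ by simp)
  exact ⟨rfl, left_eq_add.1 h⟩

/-! ### Weak bisimilarity -/

/-- A transition system with silent steps and with steps labelled by a visible action. -/
structure TransSys (S A : Type*) where
  silent : S → S → Prop
  visible : S → A → S → Prop

namespace TransSys

variable {S A : Type*} {M : TransSys S A} {x y z x' : S} {a : A}

/-- Finite sequences of silent steps. -/
abbrev Silents (M : TransSys S A) : S → S → Prop := ReflTransGen M.silent

/-- Weak visible step: one visible step surrounded by silent ones. -/
def WeakVisible (M : TransSys S A) (x : S) (a : A) (x' : S) : Prop :=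
  ∃ u w, M.Silents x u ∧ M.visible u a w ∧ M.Silents w x'

/-- Weak bisimulation, where single steps are answered by weak ones. -/
structure IsWeakBisim (M : TransSys S A) (R : S → S → Prop) : Prop where
  symm {x y : S} : R x y → R y x
  silent {x y x' : S} : R x y → M.silent x x' → ∃ y', M.Silents y y' ∧ R x' y'
  visible {x y x' : S} {a : A} : R x y → M.visible x a x' → ∃ y', M.WeakVisible y a y' ∧ R x' y'

/-- Weak bisimilarity, the largest weak bisimulation. -/
def WeakBisim (M : TransSys S A) (x y : S) : Prop := ∃ R, M.IsWeakBisim R ∧ R x y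

theorem visible.weak (h : M.visible x a x') : M.WeakVisible x a x' := ⟨x, x', .refl, h, .refl⟩

theorem isWeakBisim_weakBisim : M.IsWeakBisim M.WeakBisim where
  symm := fun ⟨R, hR, hxy⟩ => ⟨R, hR, hR.symm hxy⟩
  silent := fun ⟨R, hR, hxy⟩ hstep =>
    let ⟨y', hy, hR'⟩ := hR.silent hxy hstep
    ⟨y', hy, R, hR, hR'⟩
  visible := fun ⟨R, hR, hxy⟩ hstep =>
    let ⟨y', hy, hR'⟩ := hR.visible hxy hstep
    ⟨y', hy, R, hR, hR'⟩

namespace WeakBisim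

theorem symm (h : M.WeakBisim x y) : M.WeakBisim y x := isWeakBisim_weakBisim.symm h

theorem silents (h : M.WeakBisim x y) (hx : M.Silents x x') :
    ∃ y', M.Silents y y' ∧ M.WeakBisim x' y' :=
  exists_reflTransGen_of_simulation (E := M.WeakBisim)
    (fun h hstep => isWeakBisim_weakBisim.silent h hstep) h hx

theorem weakVisible (h : M.WeakBisim x y) (hx : M.WeakVisible x a x') :
    ∃ y', M.WeakVisible y a y' ∧ M.WeakBisim x' y' := by
  obtain ⟨u, w, hxu, huw, hwx'⟩ := hx
  obtain ⟨u', hyu', hu⟩ := h.silents hxu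
  obtain ⟨w', ⟨p, q, hu'p, hpq, hqw'⟩, hw⟩ := isWeakBisim_weakBisim.visible hu huw
  obtain ⟨y', hw'y', hx'y'⟩ := hw.silents hwx'
  exact ⟨y', ⟨p, q, hyu'.trans hu'p, hpq, hqw'.trans hw'y'⟩, hx'y'⟩

theorem refl (M : TransSys S A) (x : S) : M.WeakBisim x x := by
  refine ⟨Eq, ⟨Eq.symm, ?_, ?_⟩, rfl⟩
  · rintro x _ x' rfl hstep
    exact ⟨x', .single hstep, rfl⟩
  · rintro x _ x' a rfl hstep
    exact ⟨x', visible.weak hstep, rfl⟩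

theorem trans (hxy : M.WeakBisim x y) (hyz : M.WeakBisim y z) : M.WeakBisim x z := by
  refine ⟨Comp M.WeakBisim M.WeakBisim, ⟨?_, ?_, ?_⟩, y, hxy, hyz⟩
  · rintro x z ⟨y, hxy, hyz⟩
    exact ⟨y, hyz.symm, hxy.symm⟩
  · rintro x z x' ⟨y, hxy, hyz⟩ hstep
    obtain ⟨y', hyy', hx'y'⟩ := hxy.silents (.single hstep)
    obtain ⟨z', hzz', hy'z'⟩ := hyz.silents hyy'
    exact ⟨z', hzz', y', hx'y', hy'z'⟩
  · rintro x z x' a ⟨y, hxy, hyz⟩ hstep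
    obtain ⟨y', hyy', hx'y'⟩ := hxy.weakVisible (visible.weak hstep)
    obtain ⟨z', hzz', hy'z'⟩ := hyz.weakVisible hyy'
    exact ⟨z', hzz', y', hx'y', hy'z'⟩

theorem of_unique_silent (hstep : M.silent x y) (hunique : ∀ z, M.silent x z → z = y)
    (hvisible : ∀ a z, ¬ M.visible x a z) : M.WeakBisim x y := by
  refine ⟨fun p q => p = q ∨ s(p, q) = s(x, y), ⟨?_, ?_, ?_⟩, .inr rfl⟩
  · rintro p q (rfl | hpq)
    · exact .inl rfl
    · exact .inr (Sym2.eq_swap.trans hpq)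
  · rintro p q p' (rfl | hpq) hp
    · exact ⟨p', .single hp, .inl rfl⟩
    · rcases Sym2.eq_iff.1 hpq with ⟨rfl, rfl⟩ | ⟨rfl, rfl⟩
      · exact ⟨q, .refl, .inl (hunique _ hp)⟩
      · exact ⟨p', .head hstep (.single hp), .inl rfl⟩
  · rintro p q p' a (rfl | hpq) hp
    · exact ⟨p', visible.weak hp, .inl rfl⟩
    · rcases Sym2.eq_iff.1 hpq with ⟨rfl, rfl⟩ | ⟨rfl, rfl⟩
      · exact (hvisible _ _ hp).elim
      · exact ⟨p', ⟨p, p', .single hstep, hp, .refl⟩, .inl rfl⟩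

end WeakBisim

end TransSys

/-! ### Processes as multisets of components -/

namespace SCong

variable {P Q S S' : Proc}

theorem lift (h : SCong P Q) (d k : ℕ) : SCong (P.lift d k) (Q.lift d k) := by
  induction h generalizing k with
  | refl P => exact .refl _
  | symm _ ih => exact (ih k).symm
  | trans _ _ ih₁ ih₂ => exact (ih₁ k).trans (ih₂ k)
  | parComm P Q => exact .parComm _ _
  | parAssoc P Q R => exact .parAssoc _ _ _
  | parNil P => exact .parNil _
  | parCong _ _ ih₁ ih₂ => exact .parCong (ih₁ k) (ih₂ k)
  | inpCong a _ ih => exact .inpCong a (ih (k + 1))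
  | outCong a _ ih => exact .outCong a (ih k)

theorem subst_left (h : SCong P Q) (k : ℕ) (S : Proc) : SCong (P.subst k S) (Q.subst k S) := by
  induction h generalizing k with
  | refl P => exact .refl _
  | symm _ ih => exact (ih k).symm
  | trans _ _ ih₁ ih₂ => exact (ih₁ k).trans (ih₂ k)
  | parComm P Q => exact .parComm _ _
  | parAssoc P Q R => exact .parAssoc _ _ _
  | parNil P => exact .parNil _
  | parCong _ _ ih₁ ih₂ => exact .parCong (ih₁ k) (ih₂ k)
  | inpCong a _ ih => exact .inpCong a (ih (k + 1))
  | outCong a _ ih => exact .outCong a (ih k)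

theorem subst_right (h : SCong S S') (P : Proc) (k : ℕ) : SCong (P.subst k S) (P.subst k S') := by
  induction P generalizing k with
  | nil => exact .refl _
  | pvar n =>
    simp only [Proc.subst]
    split_ifs
    exacts [h.lift _ _, .refl _, .refl _]
  | par P Q ihP ihQ => exact .parCong (ihP k) (ihQ k)
  | inp a P ih => exact .inpCong a (ih (k + 1))
  | out a P ih => exact .outCong a (ih k)

theorem fnames_eq (h : SCong P Q) : P.fnames = Q.fnames := by
  induction h with
  | refl P => rfl
  | symm _ ih => exact ih.symm
  | trans _ _ ih₁ ih₂ => exact ih₁.trans ih₂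
  | parComm P Q => exact Finset.union_comm _ _
  | parAssoc P Q R => exact Finset.union_assoc _ _ _
  | parNil P => exact Finset.union_empty _
  | parCong _ _ ih₁ ih₂ => simp only [Proc.fnames, ih₁, ih₂]
  | inpCong a _ ih => simp only [Proc.fnames, ih]
  | outCong a _ ih => simp only [Proc.fnames, ih]

end SCong

instance Proc.setoid : Setoid Proc := ⟨SCong, .refl, .symm, .trans⟩

/-- Processes up to structural congruence. -/
def ProcClass : Type := Quotient Proc.setoid

namespace ProcClass

/-- The congruence class of a process. -/
def mk (P : Proc) : ProcClass := Quotient.mk _ P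

theorem mk_eq_mk {P Q : Proc} : mk P = mk Q ↔ SCong P Q := Quotient.eq

theorem exists_mk_eq (p : ProcClass) : ∃ P, mk P = p := Quotient.exists_rep p

instance : Zero ProcClass := ⟨mk .nil⟩

instance : Add ProcClass := ⟨Quotient.map₂ Proc.par fun _ _ hP _ _ hQ => .parCong hP hQ⟩

protected theorem add_comm (p q : ProcClass) : p + q = q + p :=
  Quotient.inductionOn₂ p q fun P Q => mk_eq_mk.2 (.parComm P Q)

protected theorem add_zero (p : ProcClass) : p + 0 = p :=
  Quotient.inductionOn p fun P => mk_eq_mk.2 (.parNil P)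

instance : AddCommMonoid ProcClass where
  add_assoc p q r := Quotient.inductionOn₃ p q r fun P Q R => mk_eq_mk.2 (.parAssoc P Q R)
  zero_add p := (ProcClass.add_comm 0 p).trans p.add_zero
  add_zero := ProcClass.add_zero
  add_comm := ProcClass.add_comm
  nsmul := nsmulRec

end ProcClass

/-- The parallel components of a process: prefixes, whose bodies and payloads are taken up to
structural congruence, and variables. -/
inductive Component
  | pvar : ℕ → Component
  | inp : Name → ProcClass → Component
  | out : Name → ProcClass → Component

/-- A process up to structural congruence, as the multiset of its parallel components. -/
abbrev Soup := Multiset Component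

/-- The multiset of the parallel components of a process. -/
def Proc.soup : Proc → Soup
  | nil => 0
  | pvar n => {.pvar n}
  | par P Q => soup P + soup Q
  | inp a P => {.inp a (.mk P)}
  | out a P => {.out a (.mk P)}

local notation "⟪" P "⟫" => Proc.soup P

/-- The process class consisting of a single component. -/
def Component.toClass : Component → ProcClass
  | pvar n => .mk (.pvar n)
  | inp a p => Quotient.map (Proc.inp a) (fun _ _ h => .inpCong a h) p
  | out a p => Quotient.map (Proc.out a) (fun _ _ h => .outCong a h) p

namespace Proc

variable {P Q R B : Proc}

@[simp] theorem soup_nil : ⟪nil⟫ = 0 := rfl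

@[simp] theorem soup_par (P Q : Proc) : ⟪par P Q⟫ = ⟪P⟫ + ⟪Q⟫ := rfl

theorem _root_.SCong.soup_eq (h : SCong P Q) : ⟪P⟫ = ⟪Q⟫ := by
  induction h with
  | refl P => rfl
  | symm _ ih => exact ih.symm
  | trans _ _ ih₁ ih₂ => exact ih₁.trans ih₂
  | parComm P Q => exact add_comm _ _
  | parAssoc P Q R => exact add_assoc _ _ _
  | parNil P => exact add_zero _
  | parCong _ _ ih₁ ih₂ => rw [soup_par, soup_par, ih₁, ih₂]
  | inpCong a h _ => rw [soup, soup, ProcClass.mk_eq_mk.2 h]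
  | outCong a h _ => rw [soup, soup, ProcClass.mk_eq_mk.2 h]

theorem sum_toClass_soup (P : Proc) : (⟪P⟫.map Component.toClass).sum = .mk P := by
  induction P with
  | nil => rfl
  | par P Q ihP ihQ => rw [soup_par, Multiset.map_add, Multiset.sum_add, ihP, ihQ]; rfl
  | _ => exact Multiset.sum_singleton _

theorem soup_eq_soup_iff : ⟪P⟫ = ⟪Q⟫ ↔ SCong P Q :=
  ⟨fun h => ProcClass.mk_eq_mk.1 (by rw [← sum_toClass_soup P, h, sum_toClass_soup]),
    SCong.soup_eq⟩

theorem soup_subst_congr {B' R' : Proc} (hB : SCong B B') (hR : SCong R R') :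
    ⟪B.subst 0 R⟫ = ⟪B'.subst 0 R'⟫ :=
  ((hB.subst_left 0 R).trans (hR.subst_right B' 0)).soup_eq

theorem soup_surjective : Function.Surjective soup := by
  intro m
  induction m using Multiset.induction_on with
  | empty => exact ⟨nil, rfl⟩
  | cons c m ih =>
    obtain ⟨P, rfl⟩ := ih
    suffices ∃ Q, ⟪Q⟫ = {c} by
      obtain ⟨Q, hQ⟩ := this
      exact ⟨par Q P, by rw [soup_par, hQ, Multiset.singleton_add]⟩
    cases c with
    | pvar n => exact ⟨pvar n, rfl⟩
    | inp a p =>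
      obtain ⟨B, rfl⟩ := p.exists_mk_eq
      exact ⟨inp a B, rfl⟩
    | out a p =>
      obtain ⟨R, rfl⟩ := p.exists_mk_eq
      exact ⟨out a R, rfl⟩

end Proc

namespace Soup

/-- The soup `m` emits `R` on `a` and becomes `m'`. -/
def Out (m : Soup) (a : Name) (R : Proc) (m' : Soup) : Prop := m = ⟪.out a R⟫ + m'

/-- The soup `m` receives `R` on `a` and becomes `m'`. -/
def In (m : Soup) (a : Name) (R : Proc) (m' : Soup) : Prop :=
  ∃ B rest, m = ⟪.inp a B⟫ + rest ∧ m' = ⟪B.subst 0 R⟫ + rest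

/-- Two components of the soup `m` communicate. -/
def Tau (m m' : Soup) : Prop := ∃ a R u, m.Out a R u ∧ u.In a R m'

/-- Weak internal transitions of soups. -/
abbrev Taus : Soup → Soup → Prop := ReflTransGen Tau

/-- Labelled transitions of soups. -/
def Trans (m : Soup) : Label → Soup → Prop
  | .tau, m' => m.Tau m'
  | .outl a R, m' => m.Out a R m'
  | .inl a R, m' => m.In a R m'

variable {m m' p q : Soup} {a : Name} {R : Proc} {l : Label}

theorem Out.add_right (h : m.Out a R m') (s : Soup) : (m + s).Out a R (m' + s) := by
  subst h
  exact add_assoc _ _ _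

theorem In.add_right (h : m.In a R m') (s : Soup) : (m + s).In a R (m' + s) := by
  obtain ⟨B, rest, rfl, rfl⟩ := h
  exact ⟨B, rest + s, add_assoc _ _ _, add_assoc _ _ _⟩

theorem In.add_left (h : m.In a R m') (s : Soup) : (s + m).In a R (s + m') := by
  simpa only [add_comm s] using h.add_right s

theorem Tau.add_right (h : m.Tau m') (s : Soup) : (m + s).Tau (m' + s) := by
  obtain ⟨a, R, u, hout, hin⟩ := h
  exact ⟨a, R, u + s, hout.add_right s, hin.add_right s⟩

theorem Tau.add_left (h : m.Tau m') (s : Soup) : (s + m).Tau (s + m') := by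
  simpa only [add_comm s] using h.add_right s

theorem Taus.add_right (h : m.Taus m') (s : Soup) : (m + s).Taus (m' + s) :=
  h.lift (· + s) fun _ _ hstep => hstep.add_right s

theorem Trans.add_right (h : m.Trans l m') (s : Soup) : (m + s).Trans l (m' + s) :=
  match l with
  | .tau => Tau.add_right h s
  | .outl _ _ => Out.add_right h s
  | .inl _ _ => In.add_right h s

theorem Trans.add_left (h : m.Trans l m') (s : Soup) : (s + m).Trans l (s + m') := by
  simpa only [add_comm s] using h.add_right s

theorem Out.tau_add (hout : m.Out a R m') (hin : p.In a R q) : (m + p).Tau (m' + q) :=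
  ⟨a, R, m' + p, hout.add_right p, hin.add_left m'⟩

theorem In.tau_add (hin : m.In a R m') (hout : p.Out a R q) : (m + p).Tau (m' + q) := by
  rw [add_comm m, add_comm m']
  exact hout.tau_add hin

theorem Out.of_add (h : (m + p).Out a R q) :
    (∃ m', m.Out a R m' ∧ q = m' + p) ∨ (∃ p', p.Out a R p' ∧ q = m + p') :=
  add_eq_singleton_add h

theorem In.of_add (h : (m + p).In a R q) :
    (∃ m', m.In a R m' ∧ q = m' + p) ∨ (∃ p', p.In a R p' ∧ q = m + p') := by
  obtain ⟨B, rest, hsplit, rfl⟩ := h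
  rcases add_eq_singleton_add hsplit with ⟨u, rfl, rfl⟩ | ⟨u, rfl, rfl⟩
  · exact .inl ⟨_, ⟨B, u, rfl, rfl⟩, (add_assoc _ _ _).symm⟩
  · exact .inr ⟨_, ⟨B, u, rfl, rfl⟩, add_left_comm _ _ _⟩

theorem Tau.of_add (h : (m + p).Tau q) :
    (∃ m', m.Tau m' ∧ q = m' + p) ∨ (∃ p', p.Tau p' ∧ q = m + p') ∨
      (∃ a R m' p', m.Out a R m' ∧ p.In a R p' ∧ q = m' + p') ∨
      (∃ a R m' p', m.In a R m' ∧ p.Out a R p' ∧ q = m' + p') := by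
  obtain ⟨a, R, u, hout, hin⟩ := h
  rcases hout.of_add with ⟨m', hm, rfl⟩ | ⟨p', hp, rfl⟩ <;>
    rcases hin.of_add with ⟨m'', hm', rfl⟩ | ⟨p'', hp', rfl⟩
  · exact .inl ⟨m'', ⟨a, R, m', hm, hm'⟩, rfl⟩
  · exact .inr (.inr (.inl ⟨a, R, m', p'', hm, hp', rfl⟩))
  · exact .inr (.inr (.inr ⟨a, R, m'', p', hm', hp, rfl⟩))
  · exact .inr (.inl ⟨p'', ⟨a, R, p', hp, hp'⟩, rfl⟩)

theorem Out.of_out {b : Name} {T : Proc} (h : ⟪.out b T⟫.Out a R m) :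
    b = a ∧ SCong T R ∧ m = 0 := by
  obtain ⟨hcomponent, rfl⟩ := singleton_eq_singleton_add h
  injection hcomponent with hname hclass
  exact ⟨hname, ProcClass.mk_eq_mk.1 hclass, rfl⟩

theorem In.of_inp {b : Name} {B : Proc} (h : ⟪.inp b B⟫.In a R m) :
    b = a ∧ m = ⟪B.subst 0 R⟫ := by
  obtain ⟨B', rest, hsplit, rfl⟩ := h
  obtain ⟨hcomponent, rfl⟩ := singleton_eq_singleton_add hsplit
  injection hcomponent with hname hclass
  exact ⟨hname, by
    rw [add_zero, Proc.soup_subst_congr (ProcClass.mk_eq_mk.1 hclass) (.refl R)]⟩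

theorem not_out_inp {b : Name} {B : Proc} : ¬ ⟪.inp b B⟫.Out a R m := fun h =>
  nomatch (singleton_eq_singleton_add h).1

/-- The soup `m` has no input, and all its outputs are on names in `A`. -/
def IdleOn (A : Set Name) (m : Soup) : Prop :=
  (∀ a p, .inp a p ∉ m) ∧ ∀ a p, .out a p ∈ m → a ∈ A

section IdleOn

variable {A : Set Name}

@[simp] theorem idleOn_zero : IdleOn A 0 := by simp [IdleOn]

@[simp] theorem idleOn_add : IdleOn A (m + p) ↔ IdleOn A m ∧ IdleOn A p := by
  simp only [IdleOn, Multiset.mem_add, or_imp, not_or, forall_and]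
  tauto

@[simp] theorem idleOn_out : IdleOn A ⟪.out a R⟫ ↔ a ∈ A := by simp [IdleOn, Proc.soup]

@[simp] theorem idleOn_pvar (n : ℕ) : IdleOn A ⟪.pvar n⟫ := by simp [IdleOn, Proc.soup]

theorem IdleOn.mono {B : Set Name} (hm : IdleOn A m) (hAB : A ⊆ B) : IdleOn B m :=
  ⟨hm.1, fun a p hout => hAB (hm.2 a p hout)⟩

theorem IdleOn.not_in (hm : IdleOn A m) : ¬ m.In a R m' := by
  rintro ⟨B, rest, rfl, -⟩
  exact hm.1 a (.mk B) (by simp [Proc.soup])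

theorem IdleOn.mem_of_out (hm : IdleOn A m) (h : m.Out a R m') : a ∈ A := by
  subst h
  exact idleOn_out.1 (idleOn_add.1 hm).1

theorem IdleOn.not_tau (hm : IdleOn A m) : ¬ m.Tau m' := by
  rintro ⟨a, R, u, rfl, hin⟩
  exact (idleOn_add.1 hm).2.not_in hin

end IdleOn

theorem Tau.of_add_out_nil (h : (m + ⟪.out a .nil⟫).Tau p) :
    (∃ m', m.Tau m' ∧ p = m' + ⟪.out a .nil⟫) ∨ ∃ R, m.In a R p := by
  have hidle : IdleOn {a} ⟪.out a .nil⟫ := idleOn_out.2 rfl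
  rcases h.of_add with hm | ⟨_, htau, -⟩ | ⟨_, _, _, _, -, hin, -⟩ | ⟨b, R, m', s, hin, hout, rfl⟩
  · exact .inl hm
  · exact (hidle.not_tau htau).elim
  · exact (hidle.not_in hin).elim
  · obtain ⟨rfl, -, rfl⟩ := hout.of_out
    exact .inr ⟨R, by rwa [add_zero]⟩

end Soup

section SoupTransitions

variable {P P' : Proc} {l : Label} {m : Soup}

theorem Step.soup_trans (h : Step P l P') : ⟪P⟫.Trans l ⟪P'⟫ := by
  induction h with
  | outS a P => exact (add_zero _).symm
  | inpS a Q P => exact ⟨Q, 0, (add_zero _).symm, (add_zero _).symm⟩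
  | parL Q _ ih => exact ih.add_right _
  | parR P _ ih => exact ih.add_left _
  | comm1 _ _ ih₁ ih₂ => exact Soup.Out.tau_add ih₁ ih₂
  | comm2 _ _ ih₁ ih₂ => exact Soup.In.tau_add ih₁ ih₂
  | struct hsource _ htarget ih => rwa [hsource.soup_eq, ← htarget.soup_eq]

theorem Step.of_soup_trans (h : ⟪P⟫.Trans l ⟪P'⟫) : Step P l P' := by
  suffices ∃ Q Q', ⟪P⟫ = ⟪Q⟫ ∧ Step Q l Q' ∧ ⟪Q'⟫ = ⟪P'⟫ by
    obtain ⟨Q, Q', hPQ, hstep, hQP⟩ := this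
    exact .struct (Proc.soup_eq_soup_iff.1 hPQ) hstep (Proc.soup_eq_soup_iff.1 hQP)
  cases l with
  | tau =>
    obtain ⟨a, R, _, hout, B, rest, rfl, hP'⟩ := h
    obtain ⟨T, rfl⟩ := Proc.soup_surjective rest
    exact ⟨_, _, hout.trans (add_assoc _ _ _).symm,
      .parL T (.comm1 (.outS a R) (.inpS a B R)), by simp [hP']⟩
  | outl a R => exact ⟨.par (.out a R) P', _, h, .parL P' (.outS a R), by simp⟩
  | inl a R =>
    obtain ⟨B, rest, hP, hP'⟩ := h
    obtain ⟨T, rfl⟩ := Proc.soup_surjective rest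
    exact ⟨.par (.inp a B) T, _, hP, .parL T (.inpS a B R), hP'.symm⟩

theorem Soup.Trans.exists_step (h : ⟪P⟫.Trans l m) :
    ∃ P', ⟪P'⟫ = m ∧ Step P l P' := by
  obtain ⟨P', rfl⟩ := Proc.soup_surjective m
  exact ⟨P', rfl, .of_soup_trans h⟩

theorem WTau.soup_taus (h : WTau P P') : ⟪P⟫.Taus ⟪P'⟫ :=
  h.lift Proc.soup fun _ _ hstep => Step.soup_trans hstep

theorem Soup.Taus.exists_wTau (h : ⟪P⟫.Taus m) : ∃ P', WTau P P' ∧ ⟪P'⟫ = m := by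
  refine exists_reflTransGen_of_simulation (E := fun m P => ⟪P⟫ = m) ?_ rfl h
  rintro _ m' P rfl hstep
  obtain ⟨P', rfl⟩ := Proc.soup_surjective m'
  exact ⟨P', .single (Step.of_soup_trans (l := .tau) hstep), rfl⟩

end SoupTransitions

/-! ### Barbed equivalence of implementations of a transition system -/

namespace Proc

variable {H : Set Name} {P Q R : Proc} {a : Name}

/-- The process `P` has no free name in `H`. -/
def Avoids (H : Set Name) (P : Proc) : Prop := ∀ a ∈ P.fnames, a ∉ H

theorem avoids_iff_inter_eq_empty : P.Avoids H ↔ (P.fnames : Set Name) ∩ H = ∅ :=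
  Set.disjoint_left.symm.trans Set.disjoint_iff_inter_eq_empty

theorem avoids_nil : nil.Avoids H := by simp [Avoids, fnames]

theorem avoids_par : (par P Q).Avoids H ↔ P.Avoids H ∧ Q.Avoids H := by
  simp [Avoids, fnames, or_imp, forall_and]

theorem avoids_inp : (inp a P).Avoids H ↔ a ∉ H ∧ P.Avoids H := by simp [Avoids, fnames]

theorem avoids_out : (out a P).Avoids H ↔ a ∉ H ∧ P.Avoids H := by simp [Avoids, fnames]

theorem fnames_lift (P : Proc) (d k : ℕ) : (P.lift d k).fnames = P.fnames := by
  induction P generalizing k with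
  | nil => rfl
  | pvar n => simp only [lift]; split_ifs <;> rfl
  | par P Q ihP ihQ => simp only [lift, fnames, ihP, ihQ]
  | inp a P ih => simp only [lift, fnames, ih]
  | out a P ih => simp only [lift, fnames, ih]

theorem Avoids.subst (hP : P.Avoids H) (hR : R.Avoids H) (k : ℕ) : (P.subst k R).Avoids H := by
  induction P generalizing k with
  | nil => exact hP
  | pvar n =>
    simp only [Proc.subst]
    split_ifs
    · simpa only [Avoids, fnames_lift] using hR
    · exact hP
    · exact hP
  | par P Q ihP ihQ => exact avoids_par.2 ⟨ihP (avoids_par.1 hP).1 k, ihQ (avoids_par.1 hP).2 k⟩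
  | inp a P ih => exact avoids_inp.2 ⟨(avoids_inp.1 hP).1, ih (avoids_inp.1 hP).2 (k + 1)⟩
  | out a P ih => exact avoids_out.2 ⟨(avoids_out.1 hP).1, ih (avoids_out.1 hP).2 k⟩

theorem Avoids.step {P' : Proc} {l : Label} (hP : P.Avoids H) (h : Step P l P') :
    match (generalizing := false) l with
    | .tau => P'.Avoids H
    | .outl a R => a ∉ H ∧ R.Avoids H ∧ P'.Avoids H
    | .inl a R => a ∉ H ∧ (R.Avoids H → P'.Avoids H) := by
  induction h with
  | outS a P => exact ⟨(avoids_out.1 hP).1, (avoids_out.1 hP).2, avoids_nil⟩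
  | inpS a Q P => exact ⟨(avoids_inp.1 hP).1, fun hR => (avoids_inp.1 hP).2.subst hR 0⟩
  | @parL P l P' Q _ ih =>
    have ⟨hP, hQ⟩ := avoids_par.1 hP
    cases l <;> simp only [avoids_par, hQ, and_true] at ih ⊢ <;> exact ih hP
  | @parR Q l Q' P _ ih =>
    have ⟨hP, hQ⟩ := avoids_par.1 hP
    cases l <;> simp only [avoids_par, hP, true_and] at ih ⊢ <;> exact ih hQ
  | comm1 _ _ ihP ihQ =>
    have ⟨hP, hQ⟩ := avoids_par.1 hP
    exact avoids_par.2 ⟨(ihP hP).2.2, (ihQ hQ).2 (ihP hP).2.1⟩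
  | comm2 _ _ ihP ihQ =>
    have ⟨hP, hQ⟩ := avoids_par.1 hP
    exact avoids_par.2 ⟨(ihP hP).2 (ihQ hQ).2.1, (ihQ hQ).2.2⟩
  | @struct P P' l Q Q' hsource _ htarget ih =>
    simp only [Avoids, hsource.fnames_eq] at hP
    simpa only [Avoids, htarget.fnames_eq] using ih hP

end Proc

namespace BarbedEquiv

variable {H : Set Name} {P Q P' S : Proc} {α : Barb}

theorem symm (h : BarbedEquiv H P Q) : BarbedEquiv H Q P :=
  let ⟨R, hR, hPQ⟩ := h
  ⟨R, hR, hR.1 hPQ⟩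

theorem par (h : BarbedEquiv H P Q) (hS : S.Avoids H) :
    BarbedEquiv H (.par P S) (.par Q S) :=
  let ⟨R, hR, hPQ⟩ := h
  ⟨R, hR, (hR.2 P Q hPQ).2.1 S (Proc.avoids_iff_inter_eq_empty.1 hS)⟩

theorem weakBarb (h : BarbedEquiv H P Q) (hP : StrongBarb H P α) : WeakBarb H Q α :=
  let ⟨_, hR, hPQ⟩ := h
  (hR.2 P Q hPQ).1 α hP

theorem wTau (h : BarbedEquiv H P Q) (hP : WTau P P') : ∃ Q', WTau Q Q' ∧ BarbedEquiv H P' Q' := by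
  refine exists_reflTransGen_of_simulation (E := BarbedEquiv H) ?_ h hP
  rintro P P' Q ⟨R, hR, hPQ⟩ hstep
  obtain ⟨Q', hQ, hPQ'⟩ := (hR.2 P Q hPQ).2.2 P' hstep
  exact ⟨Q', hQ, R, hR, hPQ'⟩

end BarbedEquiv

/-- The soups related by `E` to the states of `M` implement `M`: silent steps are internal
communications, and a visible action is an input on that name, whose payload is discarded.
All other channels in use belong to the set `H` of hidden names. -/
structure Implements {S : Type*} (H : Set Name) (M : TransSys S Name) (E : Soup → S → Prop) :
    Prop where
  silents_of_tau {x x' y} : E x y → x.Tau x' → ∃ y', M.Silents y y' ∧ E x' y'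
  visible_of_in {x x' y a R} : E x y → x.In a R x' → a ∉ H → ∃ y', M.visible y a y' ∧ E x' y'
  mem_of_out {x x' y a R} : E x y → x.Out a R x' → a ∈ H
  taus_of_silent {x y y'} : E x y → M.silent y y' → ∃ x', x.Taus x' ∧ E x' y'
  in_of_visible {x y y' a} : E x y → M.visible y a y' →
    a ∉ H ∧ ∃ u x', x.Taus u ∧ (∀ R, u.In a R x') ∧ E x' y'

namespace Implements

variable {S : Type*} {H : Set Name} {M : TransSys S Name} {E : Soup → S → Prop}
  {x x' p : Soup} {y y' : S} {a : Name} {P Q P' R : Proc}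

theorem silents_of_taus (I : Implements H M E) (hE : E x y) (h : x.Taus x') :
    ∃ y', M.Silents y y' ∧ E x' y' :=
  exists_reflTransGen_of_simulation (E := E) (fun hE hstep => I.silents_of_tau hE hstep) hE h

theorem taus_of_silents (I : Implements H M E) (hE : E x y) (h : M.Silents y y') :
    ∃ x', x.Taus x' ∧ E x' y' :=
  exists_reflTransGen_of_simulation (E := fun y x => E x y)
    (fun hE hstep => I.taus_of_silent hE hstep) hE h

/-- Soups that implement weakly bisimilar states. -/
def SoupBisim (M : TransSys S Name) (E : Soup → S → Prop) (x x' : Soup) : Prop :=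
  ∃ y y', E x y ∧ E x' y' ∧ M.WeakBisim y y'

theorem SoupBisim.symm (h : SoupBisim M E x x') : SoupBisim M E x' x :=
  let ⟨y, y', hE, hE', hy⟩ := h
  ⟨y', y, hE', hE, hy.symm⟩

theorem soupBisim_tau (I : Implements H M E) (h : SoupBisim M E x x') (hx : x.Tau p) :
    ∃ p', x'.Taus p' ∧ SoupBisim M E p p' := by
  obtain ⟨y, y', hE, hE', hy⟩ := h
  obtain ⟨z, hyz, hpz⟩ := I.silents_of_tau hE hx
  obtain ⟨z', hyz', hz⟩ := hy.silents hyz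
  obtain ⟨p', hxp', hpz'⟩ := I.taus_of_silents hE' hyz'
  exact ⟨p', hxp', z, z', hpz, hpz', hz⟩

theorem soupBisim_in (I : Implements H M E) (h : SoupBisim M E x x') (hx : x.In a R p)
    (ha : a ∉ H) :
    ∃ u w p', x'.Taus u ∧ u.In a R w ∧ w.Taus p' ∧ SoupBisim M E p p' := by
  obtain ⟨y, y', hE, hE', hy⟩ := h
  obtain ⟨z, hyz, hpz⟩ := I.visible_of_in hE hx ha
  obtain ⟨z', ⟨v, v', hyv, hvv', hvz'⟩, hz⟩ := hy.weakVisible (TransSys.visible.weak hyz)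
  obtain ⟨q, hxq, hqv⟩ := I.taus_of_silents hE' hyv
  obtain ⟨-, u, w, hqu, huw, hwv'⟩ := I.in_of_visible hqv hvv'
  obtain ⟨p', hwp', hp'z'⟩ := I.taus_of_silents hwv' hvz'
  exact ⟨u, w, p', hxq.trans hqu, huw R, hwp', z, z', hpz, hp'z', hz⟩

/-- Processes that consist of related soups in a common context free of hidden names. -/
def ContextBisim (H : Set Name) (M : TransSys S Name) (E : Soup → S → Prop) (P Q : Proc) : Prop :=
  ∃ x x' C, C.Avoids H ∧ ⟪P⟫ = x + ⟪C⟫ ∧ ⟪Q⟫ = x' + ⟪C⟫ ∧ SoupBisim M E x x'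

theorem ContextBisim.symm (h : ContextBisim H M E P Q) : ContextBisim H M E Q P :=
  let ⟨x, x', C, hC, hP, hQ, hx⟩ := h
  ⟨x', x, C, hC, hQ, hP, hx.symm⟩

theorem ContextBisim.par (h : ContextBisim H M E P Q) {T : Proc} (hT : T.Avoids H) :
    ContextBisim H M E (.par P T) (.par Q T) := by
  obtain ⟨x, x', C, hC, hP, hQ, hx⟩ := h
  exact ⟨x, x', .par C T, Proc.avoids_par.2 ⟨hC, hT⟩, by simp [hP, add_assoc],
    by simp [hQ, add_assoc], hx⟩

theorem contextBisim_barb (I : Implements H M E) (h : ContextBisim H M E P Q) {α : Barb}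
    (hP : StrongBarb H P α) : WeakBarb H Q α := by
  obtain ⟨x, x', C, -, hPx, hQx', hx⟩ := h
  rcases α with a | a <;> obtain ⟨ha, R, P', hstep⟩ := hP <;>
    have htrans := hPx ▸ hstep.soup_trans
  · rcases Soup.In.of_add htrans with ⟨p, hxp, -⟩ | ⟨s, hCs, -⟩
    · obtain ⟨u, w, -, hx'u, huw, -⟩ := I.soupBisim_in hx hxp ha
      obtain ⟨Q', hQQ', hQ'⟩ := (hQx' ▸ hx'u.add_right ⟪C⟫ : ⟪Q⟫.Taus _).exists_wTau
      obtain ⟨Q'', -, hQ''⟩ := Soup.Trans.exists_step (l := .inl a R) (hQ' ▸ huw.add_right ⟪C⟫)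
      exact ⟨Q', hQQ', ha, R, Q'', hQ''⟩
    · obtain ⟨Q', -, hQ'⟩ := Soup.Trans.exists_step (l := .inl a R) (hQx' ▸ hCs.add_left x')
      exact ⟨Q, .refl, ha, R, Q', hQ'⟩
  · rcases Soup.Out.of_add htrans with ⟨p, hxp, -⟩ | ⟨s, hCs, -⟩
    · obtain ⟨y, -, hE, -⟩ := hx
      exact absurd (I.mem_of_out hE hxp) ha
    · obtain ⟨Q', -, hQ'⟩ := Soup.Trans.exists_step (l := .outl a R)
        (hQx' ▸ Soup.Trans.add_left (l := .outl a R) hCs x')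
      exact ⟨Q, .refl, ha, R, Q', hQ'⟩

theorem contextBisim_tau (I : Implements H M E) (h : ContextBisim H M E P Q)
    (hP : TauStep P P') : ∃ Q', WTau Q Q' ∧ ContextBisim H M E P' Q' := by
  obtain ⟨x, x', C, hC, hPx, hQx', hx⟩ := h
  suffices ∃ p p' D, D.Avoids H ∧ ⟪P'⟫ = p + ⟪D⟫ ∧ (x' + ⟪C⟫).Taus (p' + ⟪D⟫) ∧
      SoupBisim M E p p' by
    obtain ⟨p, p', D, hD, hP'p, htaus, hp⟩ := this
    obtain ⟨Q', hQQ', hQ'⟩ := (hQx' ▸ htaus : ⟪Q⟫.Taus _).exists_wTau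
    exact ⟨Q', hQQ', p, p', D, hD, hP'p, hQ', hp⟩
  have htau : (x + ⟪C⟫).Tau ⟪P'⟫ := hPx ▸ Step.soup_trans hP
  rcases htau.of_add with ⟨p, hxp, hP'⟩ | ⟨s, hCs, hP'⟩ | ⟨a, R, p, s, hxp, hCs, -⟩ |
    ⟨a, R, p, s, hxp, hCs, hP'⟩
  · obtain ⟨p', hx'p', hp⟩ := I.soupBisim_tau hx hxp
    exact ⟨p, p', C, hC, hP', hx'p'.add_right _, hp⟩
  · obtain ⟨D, rfl, hCD⟩ := Soup.Trans.exists_step (l := .tau) hCs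
    exact ⟨x, x', D, hC.step hCD, hP', .single (hCs.add_left x'), hx⟩
  · obtain ⟨y, -, hE, -⟩ := hx
    obtain ⟨D, -, hCD⟩ := Soup.Trans.exists_step (l := .inl a R) hCs
    exact absurd (I.mem_of_out hE hxp) (hC.step hCD).1
  · obtain ⟨D, rfl, hCD⟩ := Soup.Trans.exists_step (l := .outl a R) hCs
    obtain ⟨ha, -, hD⟩ := hC.step hCD
    obtain ⟨u, w, p', hx'u, huw, hwp', hp⟩ := I.soupBisim_in hx hxp ha
    exact ⟨p, p', D, hD, hP', ((hx'u.add_right _).tail (huw.tau_add hCs)).trans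
      (hwp'.add_right _), hp⟩

theorem isBarbedBisim_contextBisim (I : Implements H M E) :
    IsBarbedBisim H (ContextBisim H M E) :=
  ⟨fun _ _ h => h.symm, fun _ _ h => ⟨fun _ => I.contextBisim_barb h,
    fun _ hT => h.par (Proc.avoids_iff_inter_eq_empty.2 hT), fun _ => I.contextBisim_tau h⟩⟩

theorem taus_add_out_nil (I : Implements H M E) (hE : E x y) (ha : a ∉ H)
    (h : (x + ⟪.out a .nil⟫).Taus p) :
    (∃ x' y', p = x' + ⟪.out a .nil⟫ ∧ M.Silents y y' ∧ E x' y') ∨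
      ∃ y', M.WeakVisible y a y' ∧ E p y' := by
  induction h with
  | refl => exact .inl ⟨x, y, rfl, .refl, hE⟩
  | tail _ hstep ih =>
    rcases ih with ⟨x', y', rfl, hyy', hE'⟩ | ⟨y', ⟨u, w, hyu, huw, hwy'⟩, hE'⟩
    · rcases hstep.of_add_out_nil with ⟨x'', htau, rfl⟩ | ⟨R, hin⟩
      · obtain ⟨y'', hy'', hE''⟩ := I.silents_of_tau hE' htau
        exact .inl ⟨x'', y'', rfl, hyy'.trans hy'', hE''⟩
      · obtain ⟨y'', hy'', hE''⟩ := I.visible_of_in hE' hin ha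
        exact .inr ⟨y'', ⟨y', y'', hyy', hy'', .refl⟩, hE''⟩
    · obtain ⟨y'', hy'', hE''⟩ := I.silents_of_tau hE' hstep
      exact .inr ⟨y'', ⟨u, w, hyu, huw, hwy'.trans hy''⟩, hE''⟩

theorem not_weakBarb_out (I : Implements H M E) (hE : E ⟪P⟫ y) : ¬ WeakBarb H P (.outb a) := by
  rintro ⟨P', hPP', ha, R, P'', hout⟩
  obtain ⟨y', -, hE'⟩ := I.silents_of_taus hE hPP'.soup_taus
  exact ha (I.mem_of_out hE' hout.soup_trans)

theorem weakBisim_silent_of_barbedEquiv (I : Implements H M E) (hP : E ⟪P⟫ y) (hQ : E ⟪Q⟫ y')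
    (h : BarbedEquiv H P Q) {z : S} (hy : M.silent y z) :
    ∃ z', M.Silents y' z' ∧ ∃ P' Q', E ⟪P'⟫ z ∧ E ⟪Q'⟫ z' ∧ BarbedEquiv H P' Q' := by
  obtain ⟨_, hPx, hxz⟩ := I.taus_of_silent hP hy
  obtain ⟨P', hPP', rfl⟩ := hPx.exists_wTau
  obtain ⟨Q', hQQ', hPQ'⟩ := h.wTau hPP'
  obtain ⟨z', hyz', hQz'⟩ := I.silents_of_taus hQ hQQ'.soup_taus
  exact ⟨z', hyz', P', Q', hxz, hQz', hPQ'⟩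

/- The context `a!<0>` triggers the visible action `a`; since the resulting process has no visible
output any more, the other process has to consume the output as well. -/
theorem weakBisim_visible_of_barbedEquiv (I : Implements H M E) (hP : E ⟪P⟫ y) (hQ : E ⟪Q⟫ y')
    (h : BarbedEquiv H P Q) {z : S} (hy : M.visible y a z) :
    ∃ z', M.WeakVisible y' a z' ∧ ∃ P' Q', E ⟪P'⟫ z ∧ E ⟪Q'⟫ z' ∧ BarbedEquiv H P' Q' := by
  obtain ⟨ha, u, x, hPu, hux, hxz⟩ := I.in_of_visible hP hy
  have hpar : BarbedEquiv H (.par P (.out a .nil)) (.par Q (.out a .nil)) :=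
    h.par (Proc.avoids_out.2 ⟨ha, Proc.avoids_nil⟩)
  have hconsume : ⟪.par P (.out a .nil)⟫.Taus x := by
    have htau : (u + ⟪.out a .nil⟫).Tau (x + 0) := (hux .nil).tau_add (add_zero _).symm
    exact (hPu.add_right _).tail (add_zero x ▸ htau)
  obtain ⟨P', hPP', rfl⟩ := hconsume.exists_wTau
  obtain ⟨Q', hQQ', hPQ'⟩ := hpar.wTau hPP'
  rcases I.taus_add_out_nil hQ ha hQQ'.soup_taus with ⟨x', -, hQ', -⟩ | ⟨z', hyz', hQz'⟩
  · obtain ⟨Q'', -, hout⟩ := Soup.Trans.exists_step (P := Q') (l := .outl a .nil)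
      (hQ'.trans (add_comm _ _))
    have hbarb : StrongBarb H Q' (.outb a) := ⟨ha, .nil, Q'', hout⟩
    exact absurd (hPQ'.symm.weakBarb hbarb) (I.not_weakBarb_out hxz)
  · exact ⟨z', hyz', P', Q', hxz, hQz', hPQ'⟩

theorem isWeakBisim_barbedEquiv (I : Implements H M E) :
    M.IsWeakBisim fun y y' => ∃ P Q, E ⟪P⟫ y ∧ E ⟪Q⟫ y' ∧ BarbedEquiv H P Q where
  symm := fun ⟨P, Q, hP, hQ, h⟩ => ⟨Q, P, hQ, hP, h.symm⟩
  silent := fun ⟨_, _, hP, hQ, h⟩ => I.weakBisim_silent_of_barbedEquiv hP hQ h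
  visible := fun ⟨_, _, hP, hQ, h⟩ => I.weakBisim_visible_of_barbedEquiv hP hQ h

theorem barbedEquiv_iff_weakBisim (I : Implements H M E) (hP : E ⟪P⟫ y) (hQ : E ⟪Q⟫ y') :
    BarbedEquiv H P Q ↔ M.WeakBisim y y' :=
  ⟨fun h => ⟨_, I.isWeakBisim_barbedEquiv, P, Q, hP, hQ, h⟩,
    fun h => ⟨_, I.isBarbedBisim_contextBisim, ⟪P⟫, ⟪Q⟫, .nil, Proc.avoids_nil,
      (add_zero _).symm, (add_zero _).symm, y, y', hP, hQ, h⟩⟩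

end Implements

/-! ### Deterministic communications -/

namespace Soup

variable {A H : Set Name} {B R : Proc} {O m x x' : Soup} {a b : Name}

theorem In.of_inp_add (h : (⟪.inp a B⟫ + O).In b R m) (hO : IdleOn A O) :
    a = b ∧ m = ⟪B.subst 0 R⟫ + O := by
  rcases h.of_add with ⟨m', hin, rfl⟩ | ⟨O', hin, -⟩
  · obtain ⟨rfl, rfl⟩ := hin.of_inp
    exact ⟨rfl, rfl⟩
  · exact (hO.not_in hin).elim

theorem Out.of_inp_add (h : (⟪.inp a B⟫ + O).Out b R m) : ∃ O', O.Out b R O' := by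
  rcases h.of_add with ⟨m', hout, -⟩ | ⟨O', hout, -⟩
  · exact (not_out_inp hout).elim
  · exact ⟨O', hout⟩

theorem Tau.of_inp_add (h : (⟪.inp a B⟫ + O).Tau m) (hO : IdleOn A O) :
    ∃ R O', O.Out a R O' ∧ m = ⟪B.subst 0 R⟫ + O' := by
  rcases h.of_add with ⟨_, ⟨_, _, _, hout, -⟩, -⟩ | ⟨_, htau, -⟩ | ⟨_, _, _, _, hout, -⟩ |
    ⟨b, R, m', O', hin, hout, rfl⟩
  · exact (not_out_inp hout).elim
  · exact (hO.not_tau htau).elim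
  · exact (not_out_inp hout).elim
  · obtain ⟨rfl, rfl⟩ := hin.of_inp
    exact ⟨R, O', hout, rfl⟩

theorem tau_inp_out (a : Name) (B R : Proc) (O : Soup) :
    (⟪.inp a B⟫ + (⟪.out a R⟫ + O)).Tau (⟪B.subst 0 R⟫ + O) :=
  ⟨a, R, ⟪.inp a B⟫ + O, add_left_comm _ _ _, B, O, rfl, rfl⟩

/-- The soup `x` has a single internal step, to `x'`, and no other step on a name outside `H`. -/
structure DetStep (H : Set Name) (x x' : Soup) : Prop where
  tau : x.Tau x'
  unique {z : Soup} : x.Tau z → z = x'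
  mem_of_in {a : Name} {R : Proc} {z : Soup} : x.In a R z → a ∈ H
  mem_of_out {a : Name} {R : Proc} {z : Soup} : x.Out a R z → a ∈ H

/-- Finite sequences of deterministic internal steps. -/
abbrev DetSteps (H : Set Name) : Soup → Soup → Prop := ReflTransGen (DetStep H)

theorem DetSteps.taus (h : DetSteps H x x') : x.Taus x' :=
  h.lift id fun _ _ hstep => hstep.tau

theorem detStep_inp_out (ha : a ∈ H) (hO : IdleOn (H \ {a}) O) (hm : m = ⟪.out a R⟫ + O) :
    DetStep H (⟪.inp a B⟫ + m) (⟪B.subst 0 R⟫ + O) := by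
  subst hm
  have hidle : IdleOn H (⟪.out a R⟫ + O) :=
    idleOn_add.2 ⟨idleOn_out.2 ha, hO.mono Set.sdiff_subset⟩
  refine ⟨tau_inp_out a B R O, fun htau => ?_, fun hin => ?_, fun hout => ?_⟩
  · obtain ⟨R', O', hout, rfl⟩ := htau.of_inp_add hidle
    rcases hout.of_add with ⟨m, hfst, rfl⟩ | ⟨m, hsnd, -⟩
    · obtain ⟨-, hR, rfl⟩ := hfst.of_out
      rw [Proc.soup_subst_congr (.refl B) hR, zero_add]
    · exact ((hO.mem_of_out hsnd).2 rfl).elim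
  · exact (hin.of_inp_add hidle).1 ▸ ha
  · obtain ⟨_, hout⟩ := hout.of_inp_add
    exact hidle.mem_of_out hout

end Soup

section UpToDet

open Soup

variable {S : Type*} {H : Set Name} {M : TransSys S Name} {E F : Soup → S → Prop}
  {x x' : Soup} {y y' : S} {a : Name}

/-- The relation `E` up to deterministic internal steps of the soup. -/
def UpToDet (H : Set Name) (E : Soup → S → Prop) (x : Soup) (y : S) : Prop :=
  ∃ z, DetSteps H x z ∧ E z y

theorem UpToDet.of_rel (h : E x y) : UpToDet H E x y := ⟨x, .refl, h⟩

theorem UpToDet.head (hstep : DetStep H x x') (h : UpToDet H E x' y) : UpToDet H E x y :=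
  let ⟨z, hsteps, hz⟩ := h
  ⟨z, .head hstep hsteps, hz⟩

/-- The steps of the soup `x` and of the state `y` correspond to each other one to one, with
targets related by `F`. -/
structure MatchesAt (H : Set Name) (M : TransSys S Name) (F : Soup → S → Prop) (x : Soup) (y : S) :
    Prop where
  silent_of_tau {z : Soup} : x.Tau z → ∃ w, M.silent y w ∧ F z w
  visible_of_in {b : Name} {R : Proc} {z : Soup} :
    x.In b R z → b ∉ H → ∃ w, M.visible y b w ∧ F z w
  mem_of_out {b : Name} {R : Proc} {z : Soup} : x.Out b R z → b ∈ H
  tau_of_silent {w : S} : M.silent y w → ∃ z, x.Tau z ∧ F z w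
  in_of_visible {b : Name} {w : S} :
    M.visible y b w → b ∉ H ∧ ∃ z, (∀ R, x.In b R z) ∧ F z w

theorem MatchesAt.of_detStep (hx : DetStep H x x') (hF : F x' y') (hy : M.silent y y')
    (hunique : ∀ z, M.silent y z → z = y') (hvisible : ∀ a z, ¬ M.visible y a z) :
    MatchesAt H M F x y where
  silent_of_tau h := ⟨y', hy, hx.unique h ▸ hF⟩
  visible_of_in h ha := absurd (hx.mem_of_in h) ha
  mem_of_out h := hx.mem_of_out h
  tau_of_silent h := ⟨x', hx.tau, hunique _ h ▸ hF⟩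
  in_of_visible h := absurd h (hvisible _ _)

theorem MatchesAt.of_idleOn (hx : IdleOn H x) (hsilent : ∀ z, ¬ M.silent y z)
    (hvisible : ∀ a z, ¬ M.visible y a z) : MatchesAt H M F x y where
  silent_of_tau h := absurd h hx.not_tau
  visible_of_in h := absurd h hx.not_in
  mem_of_out h := hx.mem_of_out h
  tau_of_silent h := absurd h (hsilent _)
  in_of_visible h := absurd h (hvisible _ _)

theorem MatchesAt.of_inp {B B' : Proc} {O : Soup} (ha : a ∉ H) (hO : IdleOn H O)
    (hx : x = ⟪.inp a B⟫ + O) (hB : ∀ R, B.subst 0 R = B') (hF : F (⟪B'⟫ + O) y')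
    (hy : M.visible y a y') (hunique : ∀ b z, M.visible y b z → b = a ∧ z = y')
    (hsilent : ∀ z, ¬ M.silent y z) : MatchesAt H M F x y where
  silent_of_tau htau := by
    obtain ⟨R, O', hout, -⟩ := (hx ▸ htau).of_inp_add hO
    exact absurd (hO.mem_of_out hout) ha
  visible_of_in hin _ := by
    obtain ⟨rfl, rfl⟩ := (hx ▸ hin).of_inp_add hO
    exact ⟨y', hy, (hB _).symm ▸ hF⟩
  mem_of_out hout := by
    obtain ⟨_, hout⟩ := (hx ▸ hout).of_inp_add
    exact hO.mem_of_out hout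
  tau_of_silent h := absurd h (hsilent _)
  in_of_visible h := by
    obtain ⟨rfl, rfl⟩ := hunique _ _ h
    exact ⟨ha, _, fun R => ⟨B, O, hx, by rw [hB]⟩, hF⟩

theorem implements_upToDet (hE : ∀ x y, E x y → MatchesAt H M (UpToDet H E) x y) :
    Implements H M (UpToDet H E) where
  silents_of_tau := by
    rintro x x' y ⟨z, hsteps, hz⟩ htau
    rcases hsteps.cases_head with rfl | ⟨w, hstep, hsteps⟩
    · obtain ⟨y', hy, hx'⟩ := (hE _ _ hz).silent_of_tau htau
      exact ⟨y', .single hy, hx'⟩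
    · exact ⟨y, .refl, hstep.unique htau ▸ ⟨z, hsteps, hz⟩⟩
  visible_of_in := by
    rintro x x' y a R ⟨z, hsteps, hz⟩ hin ha
    rcases hsteps.cases_head with rfl | ⟨w, hstep, -⟩
    · exact (hE _ _ hz).visible_of_in hin ha
    · exact absurd (hstep.mem_of_in hin) ha
  mem_of_out := by
    rintro x x' y a R ⟨z, hsteps, hz⟩ hout
    rcases hsteps.cases_head with rfl | ⟨w, hstep, -⟩
    · exact (hE _ _ hz).mem_of_out hout
    · exact hstep.mem_of_out hout
  taus_of_silent := by
    rintro x y y' ⟨z, hsteps, hz⟩ hy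
    obtain ⟨x', htau, hx'⟩ := (hE _ _ hz).tau_of_silent hy
    exact ⟨x', hsteps.taus.tail htau, hx'⟩
  in_of_visible := by
    rintro x y y' a ⟨z, hsteps, hz⟩ hy
    obtain ⟨ha, x', hin, hx'⟩ := (hE _ _ hz).in_of_visible hy
    exact ⟨ha, z, x', hsteps.taus, hin, hx'⟩

end UpToDet

/-! ### Substitution in the translation -/

namespace Proc

theorem lift_zero (P : Proc) (k : ℕ) : P.lift 0 k = P := by
  induction P generalizing k with
  | pvar n => simp [lift]
  | _ => simp [lift, *]

theorem lift_lift (P : Proc) (d e : ℕ) {k j : ℕ} (hkj : k ≤ j) (hjk : j ≤ k + e) :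
    (P.lift e k).lift d j = P.lift (d + e) k := by
  induction P generalizing k j with
  | nil => rfl
  | pvar n => grind [lift]
  | par P Q ihP ihQ => simp only [lift, ihP hkj hjk, ihQ hkj hjk]
  | inp a P ih => simp only [lift, ih (k := k + 1) (j := j + 1) (by omega) (by omega)]
  | out a P ih => simp only [lift, ih hkj hjk]

theorem lift_lift_comm (P : Proc) (d e : ℕ) {k j : ℕ} (hjk : j ≤ k) :
    (P.lift e j).lift d (k + e) = (P.lift d k).lift e j := by
  induction P generalizing k j with
  | nil => rfl
  | pvar n => grind [lift]
  | par P Q ihP ihQ => simp only [lift, ihP hjk, ihQ hjk]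
  | inp a P ih =>
    have := ih (k := k + 1) (j := j + 1) (by omega)
    simp only [lift, ← this, Nat.add_right_comm]
  | out a P ih => simp only [lift, ih hjk]

theorem subst_lift_succ (P S : Proc) (d : ℕ) {k j : ℕ} (hkj : k ≤ j) (hjk : j ≤ k + d) :
    (P.lift (d + 1) k).subst j S = P.lift d k := by
  induction P generalizing k j with
  | nil => rfl
  | pvar n => grind [lift, subst]
  | par P Q ihP ihQ => simp only [lift, subst, ihP hkj hjk, ihQ hkj hjk]
  | inp a P ih => simp only [lift, subst, ih (k := k + 1) (j := j + 1) (by omega) (by omega)]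
  | out a P ih => simp only [lift, subst, ih hkj hjk]

theorem subst_lift_comm (P S : Proc) (d : ℕ) {k j : ℕ} (hjk : j ≤ k) :
    (P.lift d j).subst (k + d) S = (P.subst k S).lift d j := by
  induction P generalizing k j with
  | nil => rfl
  | pvar n =>
    have := lift_lift S d k (k := 0) (j := j) (by omega) (by omega)
    grind [lift, subst]
  | par P Q ihP ihQ => simp only [lift, subst, ihP hjk, ihQ hjk]
  | inp a P ih =>
    have := ih (k := k + 1) (j := j + 1) (by omega)
    simp only [lift, subst, ← this, Nat.add_right_comm]
  | out a P ih => simp only [lift, subst, ih hjk]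

theorem subst_lift_one (P S : Proc) (k : ℕ) : (P.lift 1 k).subst k S = P := by
  rw [subst_lift_succ P S 0 le_rfl le_rfl, lift_zero]

theorem subst_one_lift_one_subst_zero (P V R : Proc) :
    ((P.lift 1 0).subst 1 V).subst 0 R = P.subst 0 V := by
  rw [← Nat.zero_add 1, subst_lift_comm P V 1 le_rfl, subst_lift_one]

theorem subst_one_lift_two_subst_zero (P V R : Proc) :
    ((P.lift 2 0).subst 1 V).subst 0 R = P := by
  rw [subst_lift_succ P V 1 (by omega) (by omega), subst_lift_one]

/-- Processes without free process variables, in de Bruijn form: every shift fixes them. -/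
def Closed (P : Proc) : Prop := ∀ d k, P.lift d k = P

theorem Closed.subst_eq {P : Proc} (h : P.Closed) (k : ℕ) (S : Proc) : P.subst k S = P := by
  conv_lhs => rw [← h 1 k, subst_lift_one]

end Proc

section Translation

open Proc

theorem closed_trMtV : trMtV.Closed := fun d k => by simp [trMtV, lift]

theorem closed_restartV : RestartV.Closed := fun d k => by
  simp [RestartV, FunP, closed_trMtV _ _, lift]

theorem lift_choiceV (Pv Pπ Pn : Proc) (d k : ℕ) :
    (ChoiceV Pv Pπ Pn).lift d k = ChoiceV (Pv.lift d k) (Pπ.lift d k) (Pn.lift d k) := by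
  simp only [ChoiceV, choicePlus, FunP, lift, closed_restartV _ _, closed_trMtV _ _,
    lift_lift_comm _ d 1 (Nat.zero_le k), lift_lift_comm _ d 2 (Nat.zero_le k)]
  simp

theorem subst_choiceV (Pv Pπ Pn S : Proc) (k : ℕ) :
    (ChoiceV Pv Pπ Pn).subst k S =
      ChoiceV (Pv.subst k S) (Pπ.subst k S) (Pn.subst k S) := by
  simp only [ChoiceV, choicePlus, FunP, subst, closed_restartV.subst_eq, closed_trMtV.subst_eq,
    subst_lift_comm _ S 1 (Nat.zero_le k), subst_lift_comm _ S 2 (Nat.zero_le k)]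
  simp

theorem closed_trFVV (f : ℕ) : (trFVV f).Closed := by
  intro d k
  induction f generalizing k with
  | zero => simp [trFVV, lift, lift_choiceV, Nat.add_assoc]
  | succ f ih => simp only [trFVV, lift, ih]

theorem trCV_of_isVal {v : CTm} (hv : CIsVal v) :
    trCV v = .inp cN (.par (.pvar 0)
      (.par (.out val0N ((trVV v).lift 1 0)) (.out bN RestartV))) := by
  cases v with
  | app _ _ => exact hv.elim
  | _ => simp [trCV, trVV, lift]

theorem CIsVal.liftC {v : CTm} (hv : CIsVal v) (d k : ℕ) : CIsVal (v.liftC d k) := by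
  cases v with
  | app _ _ => exact hv.elim
  | bvar n => simp only [CTm.liftC]; split_ifs <;> trivial
  | _ => trivial

theorem trCV_liftC (t : CTm) (d k : ℕ) : trCV (t.liftC d k) = (trCV t).lift d k := by
  induction t generalizing k with
  | fvar f => simp [CTm.liftC, trCV, lift, closed_trFVV f _ _, closed_restartV _ _]
  | bvar n =>
    simp only [CTm.liftC]
    split_ifs with hn <;> simp [trCV, lift, closed_restartV _ _, hn, Nat.add_right_comm]
  | lam t ih =>
    have hbody := lift_lift_comm (trCV t) d 1 (k := k + 1) (j := 0) (by omega)
    have habs := lift_lift_comm ((trCV t).lift 1 0) d 1 (k := k + 2) (j := 2) (by omega)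
    simp only [CTm.liftC, trCV, lift, closed_restartV _ _, ih, ← hbody, ← habs]
    simp
  | app t s iht ihs =>
    have hfun := lift_lift_comm (trCV t) d 1 (Nat.zero_le k)
    have harg := lift_lift_comm (trCV s) d 1 (Nat.zero_le k)
    have harg' := lift_lift_comm ((trCV s).lift 1 0) d 2 (Nat.zero_le (k + 1))
    simp only [CTm.liftC, trCV, lift, ArgV, FunP, iht, ihs, ← hfun, ← harg, ← harg']
    simp [lift]

theorem trVV_liftC {v : CTm} (hv : CIsVal v) (d k : ℕ) :
    trVV (v.liftC d k) = (trVV v).lift d k := by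
  cases v with
  | fvar f => simp only [CTm.liftC, trVV, closed_trFVV f _ _]
  | bvar n => simp only [CTm.liftC, trVV, lift]; split_ifs <;> rfl
  | lam t =>
    simp only [CTm.liftC, trVV, lift, trCV_liftC,
      ← lift_lift_comm (trCV t) d 1 (k := k + 1) (j := 0) (by omega)]
  | app _ _ => exact hv.elim

theorem trCV_substC (t : CTm) {v : CTm} (hv : CIsVal v) (k : ℕ) :
    trCV (t.substC k v) = (trCV t).subst k (trVV v) := by
  induction t generalizing k with
  | fvar f =>
    simp [CTm.substC, trCV, subst, closed_trFVV f _ _, (closed_trFVV f).subst_eq,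
      closed_restartV.subst_eq]
  | bvar n =>
    simp only [CTm.substC]
    split_ifs with hn hk
    · subst hn
      rw [trCV_of_isVal (hv.liftC _ _), trVV_liftC hv]
      simp [trCV, subst, closed_restartV.subst_eq, lift_lift, Nat.add_comm]
    · have hn1 : n - 1 + 1 = n := by omega
      simp [trCV, subst, closed_restartV.subst_eq, hn, hk, hn1]
    · simp [trCV, subst, closed_restartV.subst_eq, hn, hk]
  | lam t ih =>
    have hbody := subst_lift_comm (trCV t) (trVV v) 1 (k := k + 1) (j := 0) (by omega)
    have habs := subst_lift_comm ((trCV t).lift 1 0) (trVV v) 1 (k := k + 2) (j := 2) (by omega)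
    simp only [CTm.substC, trCV, lift, subst, closed_restartV.subst_eq, ih, ← hbody, ← habs]
    simp
  | app t s iht ihs =>
    have hfun := subst_lift_comm (trCV t) (trVV v) 1 (Nat.zero_le k)
    have harg := subst_lift_comm (trCV s) (trVV v) 1 (Nat.zero_le k)
    have harg' := subst_lift_comm ((trCV s).lift 1 0) (trVV v) 2 (Nat.zero_le (k + 1))
    simp only [CTm.substC, trCV, subst, ArgV, FunP, iht, ihs, ← hfun, ← harg, ← harg']
    simp [lift, subst]

end Translation

/-! ### The machine implemented by the translation -/

/-- States of the call-by-value NFB machine, refined so that each step of the translation is a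
step of the machine. A state `choice π v n` has announced a stuck application of a free variable
to `v` in the context `π`, and `announce a π n` is about to raise the flag `a` before restarting
with the fresh variable `n` in the context `π`. -/
inductive NFState
  | conf : CKConf → ℕ → NFState
  | choice : CStack → CTm → ℕ → NFState
  | announce : Name → CStack → ℕ → NFState

namespace NFState

/-- Silent steps of the refined NFB machine. -/
inductive Silent : NFState → NFState → Prop
  | ck {C D n} : CKStep C D → Silent (conf C n) (conf D n)
  | val {π v n} : Silent (choice π v n) (announce valF [.funI v] n)
  | ctx {π v n} : Silent (choice π v n) (announce ctxF π n)

/-- Flagged steps of the refined NFB machine. The flag of a free variable `f` is announced in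
unary, by `f` steps on `suc` and one on `z`. -/
inductive Visible : NFState → Name → NFState → Prop
  | lam {v n} :
      Visible (conf (.cont [] v) n) lamF (conf (.cont [.funI v] (.fvar n)) (n + 1))
  | suc {f π v n} : Visible (conf (.cont (.funI (.fvar (f + 1)) :: π) v) n) sucN
      (conf (.cont (.funI (.fvar f) :: π) v) n)
  | zero {π v n} : Visible (conf (.cont (.funI (.fvar 0) :: π) v) n) zN (choice π v n)
  | announce {a π n} : Visible (announce a π n) a (conf (.cont π (.fvar n)) (n + 1))

end NFState

/-- The refined NFB machine. -/
def nfMachine : TransSys NFState Name := ⟨NFState.Silent, NFState.Visible⟩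

theorem CKStep.rightUnique : Relator.RightUnique CKStep := by
  rintro C D D' hD hD'
  cases hD <;> cases hD' <;> first | rfl | contradiction

theorem CKStep.silent_unique {C D : CKConf} {n : ℕ} {y : NFState} (h : CKStep C D)
    (hy : nfMachine.silent (.conf C n) y) : y = .conf D n := by
  obtain ⟨h'⟩ := hy
  rw [CKStep.rightUnique h h']

theorem CKStep.not_visible {C D : CKConf} {n : ℕ} {a : Name} {y : NFState} (h : CKStep C D) :
    ¬ nfMachine.visible (.conf C n) a y := by
  rintro (_ | _ | _ | _) <;> cases h

section Encoding

open Soup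

/-- The messages holding the current value, the counter and the restarting code. -/
def registers (V N r : Proc) : Soup := ⟪.out val0N V⟫ + (⟪.out kN N⟫ + ⟪.out bN r⟫)

/-- The soup of a continuation-mode configuration, with the restarting code left open. -/
def contSoup (π : CStack) (v : CTm) (n : ℕ) (r : Proc) : Soup :=
  ⟪trStV π⟫ + registers (trVV v) (trFVV n) r

/-- The process that raises the flag `a` and restarts with the fresh variable `n` in `π`. -/
def announceProc (a : Name) (π : CStack) (n : ℕ) : Proc :=
  .inp a (.par ((trStV π).lift 1 0)
    (.par (.out val0N (trFVV n)) (.par (.out kN (trFVV (n + 1))) (.out bN RestartV))))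

/-- The code of the free variable `0` once it has raised the flag `z`. -/
def choiceReceiver : Proc :=
  .inp val0N (.inp cN (.inp kN (.inp bN (ChoiceV (.pvar 3) (.pvar 2) (.pvar 1)))))

/-- The soups that stand for a state of the refined NFB machine. The restarting code `r` is
irrelevant as long as the stack is not empty. -/
inductive Enc : Soup → NFState → Prop
  | ev {t π n} : Enc ⟪trEvV t π n⟫ (.conf (.ev t π) n)
  | ret {v n} :
      Enc (⟪RestartV⟫ + (⟪.out val0N (trVV v)⟫ + ⟪.out kN (trFVV n)⟫)) (.conf (.cont [] v) n)
  | cont {i π v n r} : CIsVal v → Enc (contSoup (i :: π) v n r) (.conf (.cont (i :: π) v) n)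
  | choice {π v n} : Enc ⟪ChoiceV (trVV v) (trStV π) (trFVV n)⟫ (.choice π v n)
  | announce {a π n} : a ∉ HSetV → Enc ⟪announceProc a π n⟫ (.announce a π n)

/-- Soups that reach the encoding of a state by deterministic internal steps. -/
abbrev EncUpToDet : Soup → NFState → Prop := UpToDet HSetV Enc

variable {v : CTm} {n : ℕ} {a : Name} {r : Proc} {x : Soup} {y : NFState}

theorem choiceV_eq (v : CTm) (π : CStack) (n : ℕ) :
    ChoiceV (trVV v) (trStV π) (trFVV n) =
      choicePlus (announceProc valF [.funI v] n) (announceProc ctxF π n) := by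
  simp only [ChoiceV, announceProc, trStV, trFVV, FunP, Proc.lift, closed_trFVV n _ _,
    closed_trMtV _ _]

theorem closed_choiceReceiver : choiceReceiver.Closed := fun d k => by
  simp [choiceReceiver, Proc.lift, lift_choiceV, Nat.add_assoc]

theorem encUpToDet_contSoup (hv : CIsVal v) (π : CStack) (n : ℕ) :
    EncUpToDet (contSoup π v n RestartV) (.conf (.cont π v) n) := by
  cases π with
  | nil =>
    refine .head (detStep_inp_out (a := bN) (R := RestartV)
      (O := ⟪.out val0N (trVV v)⟫ + ⟪.out kN (trFVV n)⟫) ?_ ?_ ?_) (.of_rel ?_)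
    · simp [HSetV]
    · simp [HSetV, val0N, bN, kN]
    · rw [registers]
      abel
    · simpa only [Proc.subst, if_pos, Proc.lift_zero] using Enc.ret
  | cons i π => exact .of_rel (.cont hv)

theorem MatchesAt.of_ckStep {C D : CKConf} {x' : Soup} (hstep : CKStep C D)
    (hx : DetStep HSetV x x') (hF : EncUpToDet x' (.conf D n)) :
    MatchesAt HSetV nfMachine EncUpToDet x (.conf C n) :=
  .of_detStep hx hF (.ck hstep) (fun _ => hstep.silent_unique) (fun _ _ => hstep.not_visible)

theorem matchesAt_app (t s : CTm) (π : CStack) (n : ℕ) :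
    MatchesAt HSetV nfMachine EncUpToDet ⟪trEvV (.app t s) π n⟫
      (.conf (.ev (.app t s) π) n) := by
  refine .of_ckStep .fn
    (detStep_inp_out (a := cN) (R := trStV π) (O := ⟪.out kN (trFVV n)⟫) ?_ ?_ rfl) ?_
  · simp [HSetV]
  · simp [HSetV, cN, kN]
  · have harg := Proc.subst_lift_comm ((trCV s).lift 1 0) (trStV π) 2 (Nat.zero_le 0)
    rw [Proc.subst_lift_one] at harg
    have hsubst : Proc.subst (.par ((trCV t).lift 1 0)
        (.out cN (ArgV ((trCV s).lift 1 0) (.pvar 0)))) 0 (trStV π) =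
        .par (trCV t) (.out cN (trStV (.argI s :: π))) := by
      simp [Proc.subst, Proc.lift, Proc.subst_lift_one, ArgV, FunP, trStV, harg]
    rw [hsubst, Proc.soup_par, add_assoc]
    exact .of_rel .ev

theorem matchesAt_val (hv : CIsVal v) (π : CStack) (n : ℕ) :
    MatchesAt HSetV nfMachine EncUpToDet ⟪trEvV v π n⟫ (.conf (.ev v π) n) := by
  rw [trEvV, trCV_of_isVal hv]
  refine .of_ckStep (.switch hv)
    (detStep_inp_out (a := cN) (R := trStV π) (O := ⟪.out kN (trFVV n)⟫) ?_ ?_ rfl) ?_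
  · simp [HSetV]
  · simp [HSetV, cN, kN]
  · convert encUpToDet_contSoup hv π n using 1
    simp only [contSoup, registers, Proc.subst, if_pos, Proc.lift_zero, Proc.soup_par,
      Proc.subst_lift_one, closed_restartV.subst_eq]
    abel

theorem matchesAt_ret (v : CTm) (n : ℕ) : MatchesAt HSetV nfMachine EncUpToDet
    (⟪RestartV⟫ + (⟪.out val0N (trVV v)⟫ + ⟪.out kN (trFVV n)⟫)) (.conf (.cont [] v) n) := by
  refine .of_inp (a := lamF) ?_ ?_ rfl (fun R => Proc.Closed.subst_eq ?_ 0 R) ?_ .lam ?_ ?_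
  · simp [HSetV, lamF, cN, val0N, bN, kN, chN]
  · simp [HSetV]
  · intro d k
    simp [Proc.lift, FunP, closed_trMtV _ _]
  · refine .head (detStep_inp_out (a := val0N) (O := ⟪.out kN (trFVV n)⟫) ?_ ?_ rfl)
      (.head (detStep_inp_out (a := kN) (O := 0) ?_ ?_ (add_zero _).symm) ?_)
    · simp [HSetV]
    · simp [HSetV, val0N, kN]
    · simp [HSetV]
    · simp
    · convert UpToDet.of_rel (Enc.cont (i := .funI v) (π := []) (v := .fvar n) (n := n + 1)
        (r := .nil) trivial) using 1
      simp [contSoup, registers, trStV, trVV, trFVV, FunP, Proc.subst,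
        closed_trFVV n _ _, closed_trMtV.subst_eq, Proc.subst_lift_one]
  · rintro b z ⟨⟩
    exact ⟨rfl, rfl⟩
  · rintro z (⟨⟨⟩⟩)

theorem matchesAt_consume {C D : CKConf} {P V N : Proc} {O : Soup} (hstep : CKStep C D)
    (hO : IdleOn {cN} O)
    (hD : EncUpToDet (⟪(P.subst 1 V).subst 0 r⟫ + (O + ⟪.out kN N⟫)) (.conf D n)) :
    MatchesAt HSetV nfMachine EncUpToDet (⟪.inp val0N (.inp bN P)⟫ + (O + registers V N r))
      (.conf C n) := by
  refine .of_ckStep hstep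
    (detStep_inp_out (a := val0N) (R := V) (O := O + (⟪.out kN N⟫ + ⟪.out bN r⟫)) ?_ ?_ ?_)
    (.head (detStep_inp_out (a := bN) (R := r) (O := O + ⟪.out kN N⟫) ?_ ?_ ?_) hD)
  · simp [HSetV]
  · exact idleOn_add.2 ⟨hO.mono (by simp [HSetV, cN, val0N]), by simp [HSetV, val0N, kN, bN]⟩
  · rw [registers]
    abel
  · simp [HSetV]
  · exact idleOn_add.2 ⟨hO.mono (by simp [HSetV, cN, bN]), by simp [HSetV, kN, bN]⟩
  · abel

theorem matchesAt_cont_arg (t : CTm) (π : CStack) (v : CTm) (n : ℕ) (r : Proc) :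
    MatchesAt HSetV nfMachine EncUpToDet (contSoup (.argI t :: π) v n r)
      (.conf (.cont (.argI t :: π) v) n) := by
  rw [contSoup, ← zero_add (registers _ _ _)]
  refine matchesAt_consume .arg idleOn_zero ?_
  convert UpToDet.of_rel (Enc.ev (t := t) (π := .funI v :: π) (n := n)) using 1
  simp [trEvV, trStV, FunP, Proc.subst, Proc.subst_one_lift_two_subst_zero, Proc.subst_lift_one,
    add_assoc]

theorem matchesAt_cont_lam (hv : CIsVal v) (t : CTm) (π : CStack) (n : ℕ) (r : Proc) :
    MatchesAt HSetV nfMachine EncUpToDet (contSoup (.funI (.lam t) :: π) v n r)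
      (.conf (.cont (.funI (.lam t) :: π) v) n) := by
  rw [contSoup, trStV, FunP, Proc.soup_par, add_assoc]
  refine matchesAt_consume .beta (idleOn_out.2 rfl) ?_
  rw [Proc.subst_one_lift_one_subst_zero, ← trCV_substC t hv]
  exact .of_rel .ev

theorem matchesAt_cont_fvar_succ (hv : CIsVal v) (f : ℕ) (π : CStack) (n : ℕ) (r : Proc) :
    MatchesAt HSetV nfMachine EncUpToDet (contSoup (.funI (.fvar (f + 1)) :: π) v n r)
      (.conf (.cont (.funI (.fvar (f + 1)) :: π) v) n) := by
  rw [contSoup, trStV, FunP, Proc.soup_par, add_assoc]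
  refine .of_inp (a := sucN) ?_ ?_ rfl ((closed_trFVV f).subst_eq 0) ?_ .suc ?_ ?_
  · simp [HSetV, sucN, cN, val0N, bN, kN, chN]
  · simp [HSetV, registers]
  · rw [← add_assoc]
    exact .of_rel (.cont (i := .funI (.fvar f)) hv)
  · rintro b z ⟨⟩
    exact ⟨rfl, rfl⟩
  · rintro z (⟨⟨⟩⟩)

theorem encUpToDet_choiceReceiver (π : CStack) (v : CTm) (n : ℕ) (r : Proc) :
    EncUpToDet (⟪choiceReceiver⟫ + (⟪.out cN (trStV π)⟫ + registers (trVV v) (trFVV n) r))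
      (.choice π v n) := by
  refine .head (detStep_inp_out (a := val0N) (R := trVV v)
    (O := ⟪.out cN (trStV π)⟫ + (⟪.out kN (trFVV n)⟫ + ⟪.out bN r⟫)) ?_ ?_ ?_)
    (.head (detStep_inp_out (a := cN) (O := ⟪.out kN (trFVV n)⟫ + ⟪.out bN r⟫) ?_ ?_ rfl)
    (.head (detStep_inp_out (a := kN) (O := ⟪.out bN r⟫) ?_ ?_ rfl)
    (.head (detStep_inp_out (a := bN) (O := 0) ?_ ?_ (add_zero _).symm) (.of_rel ?_))))
  case refine_3 =>
    rw [registers]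
    abel
  case refine_10 =>
    convert Enc.choice using 1
    simp [subst_choiceV, Proc.subst, Proc.subst_lift_succ, Proc.lift_zero]
  all_goals simp [HSetV, cN, val0N, bN, kN]

theorem matchesAt_cont_fvar_zero (π : CStack) (v : CTm) (n : ℕ) (r : Proc) :
    MatchesAt HSetV nfMachine EncUpToDet (contSoup (.funI (.fvar 0) :: π) v n r)
      (.conf (.cont (.funI (.fvar 0) :: π) v) n) := by
  rw [contSoup, trStV, FunP, Proc.soup_par, add_assoc]
  refine .of_inp (a := zN) ?_ ?_ rfl (closed_choiceReceiver.subst_eq 0)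
    (encUpToDet_choiceReceiver π v n r) .zero ?_ ?_
  · simp [HSetV, zN, cN, val0N, bN, kN, chN]
  · simp [HSetV, registers]
  · rintro b z ⟨⟩
    exact ⟨rfl, rfl⟩
  · rintro z (⟨⟨⟩⟩)

theorem matchesAt_announce (ha : a ∉ HSetV) (π : CStack) (n : ℕ) :
    MatchesAt HSetV nfMachine EncUpToDet ⟪announceProc a π n⟫ (.announce a π n) := by
  refine .of_inp ha idleOn_zero (add_zero _).symm (B' := .par (trStV π)
    (.par (.out val0N (trFVV n)) (.par (.out kN (trFVV (n + 1))) (.out bN RestartV))))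
    (fun R => ?_) ?_ .announce ?_ ?_
  · simp only [Proc.subst, Proc.subst_lift_one, closed_restartV.subst_eq,
      (closed_trFVV _).subst_eq]
  · rw [add_zero]
    exact encUpToDet_contSoup (v := .fvar n) trivial π (n + 1)
  · rintro b z ⟨⟩
    exact ⟨rfl, rfl⟩
  · rintro z ⟨⟩

theorem matchesAt_cont_of_idleOn {u : CTm} (hu : IdleOn HSetV ⟪trVV u⟫)
    (hfvar : ∀ f, u ≠ .fvar f) (hlam : ∀ t, u ≠ .lam t) (π : CStack) (v : CTm) (n : ℕ)
    (r : Proc) : MatchesAt HSetV nfMachine EncUpToDet (contSoup (.funI u :: π) v n r)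
      (.conf (.cont (.funI u :: π) v) n) := by
  refine .of_idleOn ?_ ?_ ?_
  · simpa [HSetV, contSoup, registers, trStV, FunP] using hu
  · rintro z (⟨⟨⟩⟩)
    exact hlam _ rfl
  · rintro a z ⟨⟩
    · exact hfvar _ rfl
    · exact hfvar _ rfl

theorem soup_choicePlus (P Q : Proc) : ⟪choicePlus P Q⟫ =
    ⟪.inp chN (.inp chN (.pvar 1))⟫ + (⟪.out chN P⟫ + ⟪.out chN Q⟫) := by
  simp only [choicePlus, Proc.soup_par]
  abel

theorem tau_choicePlus_iff {P Q : Proc} : ⟪choicePlus P Q⟫.Tau x ↔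
    x = ⟪.inp chN (P.lift 1 0)⟫ + ⟪.out chN Q⟫ ∨
      x = ⟪.inp chN (Q.lift 1 0)⟫ + ⟪.out chN P⟫ := by
  have hsubst {R S : Proc} (h : SCong R S) :
      ⟪Proc.subst (.inp chN (.pvar 1)) 0 S⟫ = ⟪.inp chN (R.lift 1 0)⟫ :=
    (Proc.soup_subst_congr (.refl _) h).symm
  rw [soup_choicePlus]
  constructor
  · intro htau
    obtain ⟨R, O', hout, rfl⟩ := htau.of_inp_add (A := {chN}) (by simp)
    rcases hout.of_add with ⟨_, hP, rfl⟩ | ⟨_, hQ, rfl⟩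
    · obtain ⟨-, hR, rfl⟩ := hP.of_out
      exact .inl (by rw [hsubst hR, zero_add])
    · obtain ⟨-, hR, rfl⟩ := hQ.of_out
      exact .inr (by rw [hsubst hR, add_zero])
  · rintro (rfl | rfl)
    · exact tau_inp_out chN (.inp chN (.pvar 1)) P _
    · rw [add_comm ⟪.out chN P⟫]
      exact tau_inp_out chN (.inp chN (.pvar 1)) Q _

theorem detStep_choicePlus (P Q : Proc) :
    DetStep HSetV (⟪.inp chN (P.lift 1 0)⟫ + ⟪.out chN Q⟫) ⟪P⟫ := by
  have hstep := detStep_inp_out (H := HSetV) (a := chN) (B := P.lift 1 0) (by simp [HSetV])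
    idleOn_zero (add_zero ⟪.out chN Q⟫).symm
  rwa [Proc.subst_lift_one, add_zero] at hstep

theorem matchesAt_choice (π : CStack) (v : CTm) (n : ℕ) :
    MatchesAt HSetV nfMachine EncUpToDet ⟪ChoiceV (trVV v) (trStV π) (trFVV n)⟫
      (.choice π v n) := by
  have hval : EncUpToDet ⟪announceProc valF [.funI v] n⟫ (.announce valF [.funI v] n) :=
    .of_rel (.announce (by simp [HSetV, valF, cN, val0N, bN, kN, chN]))
  have hctx : EncUpToDet ⟪announceProc ctxF π n⟫ (.announce ctxF π n) :=
    .of_rel (.announce (by simp [HSetV, ctxF, cN, val0N, bN, kN, chN]))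
  have hch : chN ∈ HSetV := by simp [HSetV]
  have hidle {P Q : Proc} : IdleOn HSetV (⟪.out chN P⟫ + ⟪.out chN Q⟫) := by simp [hch]
  rw [choiceV_eq]
  refine ⟨fun htau => ?_, fun hin hb => ?_, fun hout => ?_, fun hsilent => ?_, fun h => ?_⟩
  · rcases tau_choicePlus_iff.1 htau with rfl | rfl
    · exact ⟨_, .val, .head (detStep_choicePlus _ _) hval⟩
    · exact ⟨_, .ctx, .head (detStep_choicePlus _ _) hctx⟩
  · rw [soup_choicePlus] at hin
    exact absurd ((hin.of_inp_add hidle).1 ▸ hch) hb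
  · rw [soup_choicePlus] at hout
    exact hidle.mem_of_out hout.of_inp_add.choose_spec
  · cases hsilent with
    | val => exact ⟨_, tau_choicePlus_iff.2 (.inl rfl), .head (detStep_choicePlus _ _) hval⟩
    | ctx => exact ⟨_, tau_choicePlus_iff.2 (.inr rfl), .head (detStep_choicePlus _ _) hctx⟩
  · cases h

theorem Enc.matchesAt (h : Enc x y) : MatchesAt HSetV nfMachine EncUpToDet x y := by
  cases h with
  | @ev t π n =>
    cases t with
    | app t s => exact matchesAt_app t s π n
    | fvar | bvar | lam => exact matchesAt_val (by trivial) π n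
  | ret => exact matchesAt_ret _ _
  | @cont i π v n r hv =>
    rcases i with t | u
    · exact matchesAt_cont_arg t π v n r
    · cases u with
      | fvar f =>
        cases f with
        | zero => exact matchesAt_cont_fvar_zero π v n r
        | succ f => exact matchesAt_cont_fvar_succ hv f π n r
      | bvar m => exact matchesAt_cont_of_idleOn (by simp [trVV]) (by simp) (by simp) π v n r
      | lam t => exact matchesAt_cont_lam hv t π n r
      | app t s => exact matchesAt_cont_of_idleOn (by simp [trVV]) (by simp) (by simp) π v n r
  | choice => exact matchesAt_choice _ _ _
  | announce ha => exact matchesAt_announce ha _ _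

theorem implements_nfMachine : Implements HSetV nfMachine EncUpToDet :=
  implements_upToDet fun _ _ => Enc.matchesAt

end Encoding

theorem barbedEquiv_trEvV_iff (t s : CTm) (π π' : CStack) (n m : ℕ) :
    BarbedEquiv HSetV (trEvV t π n) (trEvV s π' m) ↔
      nfMachine.WeakBisim (.conf (.ev t π) n) (.conf (.ev s π') m) :=
  implements_nfMachine.barbedEquiv_iff_weakBisim (.of_rel .ev) (.of_rel .ev)


/-! ### Runs of the refined machine -/

section Runs

variable {C D E : CKConf} {π : CStack} {v : CTm} {n f : ℕ} {y : NFState}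

theorem not_ckStep_ret : ¬ CKStep (.cont [] v) D := nofun

theorem not_ckStep_stuck : ¬ CKStep (.cont (.funI (.fvar f) :: π) v) D := nofun

theorem CKSteps.to_normalForm (hD : CKSteps C D) (hE : CKSteps C E) (hnf : ∀ F, ¬ CKStep E F) :
    CKSteps D E := by
  rcases hD.total_of_right_unique CKStep.rightUnique hE with hDE | hED
  · exact hDE
  · rcases hED.cases_head with rfl | ⟨F, hEF, -⟩
    · exact .refl
    · exact (hnf F hEF).elim

theorem CKSteps.silents (h : CKSteps C D) (n : ℕ) : nfMachine.Silents (.conf C n) (.conf D n) :=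
  ReflTransGen.lift (NFState.conf · n) (fun _ _ => .ck) _ _ h

theorem exists_ckSteps_of_silents (h : nfMachine.Silents (.conf C n) y) :
    ∃ D, CKSteps C D ∧ y = .conf D n := by
  refine exists_reflTransGen_of_simulation (E := fun x D => x = .conf D n) ?_ rfl h
  rintro _ _ D rfl ⟨hstep⟩
  exact ⟨_, .single hstep, rfl⟩

theorem CKStep.weakBisim (h : CKStep C D) (n : ℕ) :
    nfMachine.WeakBisim (.conf C n) (.conf D n) :=
  .of_unique_silent (.ck h) (fun _ => h.silent_unique) (fun _ _ => h.not_visible)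

theorem CKSteps.weakBisim (h : CKSteps C D) (n : ℕ) :
    nfMachine.WeakBisim (.conf C n) (.conf D n) := by
  induction h with
  | refl => exact .refl _ _
  | tail _ hstep ih => exact ih.trans (hstep.weakBisim n)

theorem weakBisim_of_silents (h : nfMachine.Silents (.conf C n) y) :
    nfMachine.WeakBisim (.conf C n) y := by
  obtain ⟨D, hD, rfl⟩ := exists_ckSteps_of_silents h
  exact hD.weakBisim n

end Runs

/-! ### Free variables -/

section FreeVariables

variable {C C' D : CKConf} {π π' : CStack} {v v' : CTm}

/-- The free variables of a configuration of the CK machine. -/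
def fvConf : CKConf → Finset ℕ
  | .ev t π => fvC t ∪ fvSt π
  | .cont π v => fvSt π ∪ fvC v

theorem fvC_liftC (d k : ℕ) (t : CTm) : fvC (t.liftC d k) = fvC t := by
  induction t generalizing k with
  | fvar => rfl
  | bvar => simp only [CTm.liftC]; split <;> rfl
  | lam _ ih => exact ih (k + 1)
  | app t s iht ihs => simp only [CTm.liftC, fvC, iht, ihs]

theorem fvC_substC_subset (t v : CTm) (k : ℕ) : fvC (t.substC k v) ⊆ fvC t ∪ fvC v := by
  induction t generalizing k with
  | fvar => exact Finset.subset_union_left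
  | bvar m =>
    simp only [CTm.substC]
    split_ifs <;> simp [fvC_liftC, fvC]
  | lam _ ih => exact ih (k + 1)
  | app t s iht ihs =>
    simp only [CTm.substC, fvC]
    grind

theorem CKStep.fvConf_subset (h : CKStep C D) : fvConf D ⊆ fvConf C := by
  cases h with
  | fn | switch | arg => simp only [fvConf, fvC, fvSt, fvItem]; grind
  | @beta t π v =>
    have hsubst := fvC_substC_subset t v 0
    simp only [fvConf, fvSt, fvItem, fvC]
    grind

theorem CKSteps.fvConf_subset (h : CKSteps C D) : fvConf D ⊆ fvConf C := by
  induction h with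
  | refl => exact subset_rfl
  | tail _ hstep ih => exact hstep.fvConf_subset.trans ih

theorem fvSt_funI (v : CTm) : fvSt [.funI v] = fvC v := Finset.union_empty _

theorem fvSt_funI_union_subset (hC : CKSteps C (.cont π v)) (hC' : CKSteps C' (.cont π' v')) :
    fvSt [.funI v] ∪ fvSt [.funI v'] ⊆ fvConf C ∪ fvConf C' := by
  rw [fvSt_funI, fvSt_funI]
  exact Finset.union_subset_union (Finset.subset_union_right.trans hC.fvConf_subset)
    (Finset.subset_union_right.trans hC'.fvConf_subset)

theorem fvSt_union_subset {i i' : CItem} (hC : CKSteps C (.cont (i :: π) v))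
    (hC' : CKSteps C' (.cont (i' :: π') v')) : fvSt π ∪ fvSt π' ⊆ fvConf C ∪ fvConf C' :=
  Finset.union_subset_union
    ((Finset.subset_union_right.trans Finset.subset_union_left).trans hC.fvConf_subset)
    ((Finset.subset_union_right.trans Finset.subset_union_left).trans hC'.fvConf_subset)

end FreeVariables

/-! ### From normal-form bisimilarity to weak bisimilarity -/

section NFBisimToWeakBisim

/-- Contexts over variables below `n` that are related once filled with the variable `n`. -/
def RelAtFresh (R : CKConf → CKConf → Prop) (n : ℕ) (π π' : CStack) : Prop :=
  R (.cont π (.fvar n)) (.cont π' (.fvar n)) ∧ fvSt π ∪ fvSt π' ⊆ Finset.range n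

/-- The relation on states of the refined machine induced by a relation on CK configurations. -/
inductive MachineRel (R : CKConf → CKConf → Prop) : NFState → NFState → Prop
  | conf {C C' D D' n} : R C C' → fvConf C ∪ fvConf C' ⊆ Finset.range n → CKSteps C D →
      CKSteps C' D' → MachineRel R (.conf D n) (.conf D' n)
  | stuck {f π v π' v' n} : RelAtFresh R n [.funI v] [.funI v'] → RelAtFresh R n π π' →
      MachineRel R (.conf (.cont (.funI (.fvar f) :: π) v) n)
        (.conf (.cont (.funI (.fvar f) :: π') v') n)
  | choice {π v π' v' n} : RelAtFresh R n [.funI v] [.funI v'] → RelAtFresh R n π π' →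
      MachineRel R (.choice π v n) (.choice π' v' n)
  | announce {a π π' n} : RelAtFresh R n π π' →
      MachineRel R (.announce a π n) (.announce a π' n)

variable {R : CKConf → CKConf → Prop} {C C' D' : CKConf} {π π' : CStack} {v : CTm}
  {n f : ℕ} {a : Name} {x y x' : NFState}

theorem RelAtFresh.symm (hR : ∀ {C C'}, R C C' → R C' C) (h : RelAtFresh R n π π') :
    RelAtFresh R n π' π :=
  ⟨hR h.1, Finset.union_comm (fvSt π') _ ▸ h.2⟩

theorem RelAtFresh.machineRel (h : RelAtFresh R n π π') : MachineRel R
    (.conf (.cont π (.fvar n)) (n + 1)) (.conf (.cont π' (.fvar n)) (n + 1)) := by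
  refine .conf h.1 ?_ .refl .refl
  have hfv := h.2
  simp only [fvConf, fvC]
  grind

theorem MachineRel.symm (hR : ∀ {C C'}, R C C' → R C' C) (h : MachineRel R x y) :
    MachineRel R y x := by
  cases h with
  | conf h hfv hD hD' => exact .conf (hR h) (Finset.union_comm (fvConf _) _ ▸ hfv) hD' hD
  | stuck hval hctx => exact .stuck (hval.symm hR) (hctx.symm hR)
  | choice hval hctx => exact .choice (hval.symm hR) (hctx.symm hR)
  | announce h => exact .announce (h.symm hR)

theorem MachineRel.silent (h : MachineRel R x y) (hx : nfMachine.silent x x') :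
    ∃ y', nfMachine.Silents y y' ∧ MachineRel R x' y' := by
  cases h with
  | conf h hfv hD hD' =>
    obtain ⟨hstep⟩ := hx
    exact ⟨_, .refl, .conf h hfv (hD.tail hstep) hD'⟩
  | stuck =>
    obtain ⟨hstep⟩ := hx
    exact (not_ckStep_stuck hstep).elim
  | choice hval hctx =>
    cases hx with
    | val => exact ⟨_, .single .val, .announce hval⟩
    | ctx => exact ⟨_, .single .ctx, .announce hctx⟩
  | announce => cases hx

theorem exists_ret_of_isNFBisimV (hR : IsNFBisimV R) (h : R C C')
    (hfv : fvConf C ∪ fvConf C' ⊆ Finset.range n) (hC : CKSteps C (.cont [] v))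
    (hC' : CKSteps C' D') :
    ∃ v', CKSteps D' (.cont [] v') ∧ RelAtFresh R n [.funI v] [.funI v'] := by
  obtain ⟨v', hv', hrel⟩ := (hR.2 C C' h).1 v hC
  have hbound := (fvSt_funI_union_subset hC hv').trans hfv
  refine ⟨v', hC'.to_normalForm hv' fun _ => not_ckStep_ret, hrel n fun hn => ?_, hbound⟩
  rw [← fvSt_funI v, ← fvSt_funI v'] at hn
  exact Finset.notMem_range_self (hbound hn)

theorem exists_stuck_of_isNFBisimV (hR : IsNFBisimV R) (h : R C C')
    (hfv : fvConf C ∪ fvConf C' ⊆ Finset.range n)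
    (hC : CKSteps C (.cont (.funI (.fvar f) :: π) v)) (hC' : CKSteps C' D') :
    ∃ π' v', CKSteps D' (.cont (.funI (.fvar f) :: π') v') ∧
      RelAtFresh R n [.funI v] [.funI v'] ∧ RelAtFresh R n π π' := by
  obtain ⟨π', v', hstuck, hrel⟩ := (hR.2 C C' h).2 f π v hC
  have hbound_val := (fvSt_funI_union_subset hC hstuck).trans hfv
  have hbound_ctx := (fvSt_union_subset hC hstuck).trans hfv
  obtain ⟨hval, hctx⟩ := hrel n fun hn => by
    rw [Finset.union_assoc, ← fvSt_funI v, ← fvSt_funI v'] at hn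
    exact Finset.notMem_range_self (Finset.union_subset hbound_val hbound_ctx hn)
  exact ⟨π', v', hC'.to_normalForm hstuck fun _ => not_ckStep_stuck, ⟨hval, hbound_val⟩,
    hctx, hbound_ctx⟩

theorem MachineRel.visible (hR : IsNFBisimV R) (h : MachineRel R x y)
    (hx : nfMachine.visible x a x') : ∃ y', nfMachine.WeakVisible y a y' ∧ MachineRel R x' y' := by
  cases h with
  | @conf C C' D D' n h hfv hD hD' =>
    cases hx with
    | lam =>
      obtain ⟨v', hret, hval⟩ := exists_ret_of_isNFBisimV hR h hfv hD hD'
      exact ⟨_, ⟨_, _, hret.silents n, .lam, .refl⟩, hval.machineRel⟩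
    | suc =>
      obtain ⟨π', v', hstuck, hval, hctx⟩ := exists_stuck_of_isNFBisimV hR h hfv hD hD'
      exact ⟨_, ⟨_, _, hstuck.silents n, .suc, .refl⟩, .stuck hval hctx⟩
    | zero =>
      obtain ⟨π', v', hstuck, hval, hctx⟩ := exists_stuck_of_isNFBisimV hR h hfv hD hD'
      exact ⟨_, ⟨_, _, hstuck.silents n, .zero, .refl⟩, .choice hval hctx⟩
  | stuck hval hctx =>
    cases hx with
    | suc => exact ⟨_, TransSys.visible.weak .suc, .stuck hval hctx⟩
    | zero => exact ⟨_, TransSys.visible.weak .zero, .choice hval hctx⟩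
  | choice => cases hx
  | announce h =>
    cases hx
    exact ⟨_, TransSys.visible.weak .announce, h.machineRel⟩

theorem IsNFBisimV.isWeakBisim_machineRel (hR : IsNFBisimV R) :
    nfMachine.IsWeakBisim (MachineRel R) where
  symm := MachineRel.symm fun h => hR.1 h
  silent := MachineRel.silent
  visible := MachineRel.visible hR

theorem NFBisimV.weakBisim (h : NFBisimV C C') (hfv : fvConf C ∪ fvConf C' ⊆ Finset.range n) :
    nfMachine.WeakBisim (.conf C n) (.conf C' n) :=
  let ⟨R, hR, hCC'⟩ := h
  ⟨MachineRel R, hR.isWeakBisim_machineRel, .conf hCC' hfv .refl .refl⟩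

end NFBisimToWeakBisim

/-! ### Renaming of free variables -/

/-- Renaming of the free variables of a term; bound variables are de Bruijn indices, so there is
no capture. -/
def CTm.rename (σ : ℕ → ℕ) : CTm → CTm
  | .fvar f => .fvar (σ f)
  | .bvar m => .bvar m
  | .lam t => .lam (t.rename σ)
  | .app t s => .app (t.rename σ) (s.rename σ)

/-- Renaming of the free variables of a stack item. -/
def CItem.rename (σ : ℕ → ℕ) : CItem → CItem
  | .argI t => .argI (t.rename σ)
  | .funI v => .funI (v.rename σ)

/-- Renaming of the free variables of a configuration of the CK machine. -/
def CKConf.rename (σ : ℕ → ℕ) : CKConf → CKConf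
  | .ev t π => .ev (t.rename σ) (π.map (.rename σ))
  | .cont π v => .cont (π.map (.rename σ)) (v.rename σ)

section Renaming

variable {σ τ : ℕ → ℕ} {C D : CKConf}

theorem CTm.rename_liftC (σ : ℕ → ℕ) (t : CTm) (d k : ℕ) :
    (t.liftC d k).rename σ = (t.rename σ).liftC d k := by
  induction t generalizing k with
  | fvar => rfl
  | bvar => simp only [CTm.liftC, CTm.rename]; split <;> rfl
  | lam t ih => simp only [CTm.liftC, CTm.rename, ih]
  | app t s iht ihs => simp only [CTm.liftC, CTm.rename, iht, ihs]

theorem CTm.rename_substC (σ : ℕ → ℕ) (t v : CTm) (k : ℕ) :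
    (t.substC k v).rename σ = (t.rename σ).substC k (v.rename σ) := by
  induction t generalizing k with
  | fvar => rfl
  | bvar m =>
    simp only [CTm.substC, CTm.rename]
    split_ifs
    · exact rename_liftC ..
    · rfl
    · rfl
  | lam t ih => simp only [CTm.substC, CTm.rename, ih]
  | app t s iht ihs => simp only [CTm.substC, CTm.rename, iht, ihs]

theorem CTm.rename_id (t : CTm) : t.rename id = t := by
  induction t <;> simp_all [CTm.rename]

theorem CTm.rename_rename (σ τ : ℕ → ℕ) (t : CTm) :
    (t.rename τ).rename σ = t.rename (σ ∘ τ) := by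
  induction t <;> simp_all [CTm.rename]

theorem CTm.rename_congr {t : CTm} (h : ∀ f ∈ fvC t, σ f = τ f) : t.rename σ = t.rename τ := by
  induction t with
  | fvar f => simp [CTm.rename, h f (by simp [fvC])]
  | bvar => rfl
  | lam t ih => simp [CTm.rename, ih h]
  | app t s iht ihs =>
    simp only [fvC, Finset.forall_mem_union] at h
    simp [CTm.rename, iht h.1, ihs h.2]

theorem CItem.rename_congr {i : CItem} (h : ∀ f ∈ fvItem i, σ f = τ f) :
    i.rename σ = i.rename τ := by
  cases i with
  | argI t | funI t => simp only [CItem.rename, t.rename_congr h]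

theorem map_rename_congr {π : CStack} (h : ∀ f ∈ fvSt π, σ f = τ f) :
    π.map (CItem.rename σ) = π.map (CItem.rename τ) := by
  induction π with
  | nil => rfl
  | cons i π ih =>
    simp only [fvSt, Finset.forall_mem_union] at h
    rw [List.map_cons, List.map_cons, i.rename_congr h.1, ih h.2]

theorem CKConf.rename_id (C : CKConf) : C.rename id = C := by
  have hitem : CItem.rename id = id := by
    ext i
    cases i <;> simp only [CItem.rename, CTm.rename_id, id]
  cases C <;> simp [CKConf.rename, CTm.rename_id, hitem]

theorem CKConf.rename_rename (σ τ : ℕ → ℕ) (C : CKConf) :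
    (C.rename τ).rename σ = C.rename (σ ∘ τ) := by
  have hitem : CItem.rename σ ∘ CItem.rename τ = CItem.rename (σ ∘ τ) := by
    ext i
    cases i <;> simp only [CItem.rename, CTm.rename_rename, Function.comp]
  cases C <;> simp [CKConf.rename, CTm.rename_rename, hitem]

theorem CTm.rename_surjective (σ : Equiv.Perm ℕ) : (CTm.rename σ).Surjective := fun t =>
  ⟨t.rename σ.symm, by rw [rename_rename, σ.self_comp_symm, rename_id]⟩

theorem CItem.rename_surjective (σ : Equiv.Perm ℕ) : (CItem.rename σ).Surjective := by
  rintro (t | t) <;> obtain ⟨t, rfl⟩ := CTm.rename_surjective σ t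
  · exact ⟨.argI t, rfl⟩
  · exact ⟨.funI t, rfl⟩

theorem CKStep.rename (σ : ℕ → ℕ) (h : CKStep C D) : CKStep (C.rename σ) (D.rename σ) := by
  cases h with
  | fn => exact .fn
  | @switch v _ hv => exact .switch (by cases v <;> trivial)
  | arg => exact .arg
  | beta =>
    rw [CKConf.rename, CTm.rename_substC]
    exact .beta

theorem CKSteps.rename (σ : ℕ → ℕ) (h : CKSteps C D) : CKSteps (C.rename σ) (D.rename σ) :=
  ReflTransGen.lift (CKConf.rename σ) (fun _ _ => .rename σ) _ _ h

theorem ckSteps_rename_iff (σ : Equiv.Perm ℕ) :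
    CKSteps (C.rename σ) (D.rename σ) ↔ CKSteps C D := by
  refine ⟨fun h => ?_, .rename σ⟩
  simpa only [CKConf.rename_rename, σ.symm_comp_self, CKConf.rename_id] using h.rename σ.symm

end Renaming

/-! ### From weak bisimilarity to normal-form bisimilarity -/

section WeakBisimToNFBisim

variable {C C' : CKConf} {π π' : CStack} {v v' : CTm} {n f : ℕ} {a : Name} {y : NFState}

theorem weakBisim_conf_of_weakVisible_choice (h : nfMachine.WeakVisible (.choice π v n) a y) :
    (a = valF ∧ nfMachine.WeakBisim (.conf (.cont [.funI v] (.fvar n)) (n + 1)) y) ∨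
      (a = ctxF ∧ nfMachine.WeakBisim (.conf (.cont π (.fvar n)) (n + 1)) y) := by
  obtain ⟨u, w, hu, hvisible, hw⟩ := h
  rcases hu.cases_head with rfl | ⟨u', hu', huu'⟩
  · cases hvisible
  · have hterminal {b ρ z} : ¬ nfMachine.silent (.announce b ρ n) z := nofun
    cases hu' <;>
    · rcases huu'.cases_head with rfl | ⟨z, hz, -⟩
      · cases hvisible
        simp [weakBisim_of_silents hw]
      · exact (hterminal hz).elim

theorem weakBisim_conf_of_choice (hy : nfMachine.Silents (.choice π' v' n) y)
    (h : nfMachine.WeakBisim (.choice π v n) y) :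
    nfMachine.WeakBisim (.conf (.cont [.funI v] (.fvar n)) (n + 1))
        (.conf (.cont [.funI v'] (.fvar n)) (n + 1)) ∧
      nfMachine.WeakBisim (.conf (.cont π (.fvar n)) (n + 1))
        (.conf (.cont π' (.fvar n)) (n + 1)) := by
  constructor
  · obtain ⟨z, ⟨u, w, hu, huw, hw⟩, hz⟩ := h.weakVisible ⟨_, _, .single .val, .announce, .refl⟩
    rcases weakBisim_conf_of_weakVisible_choice ⟨u, w, hy.trans hu, huw, hw⟩ with h | h
    · exact hz.trans h.2.symm
    · exact absurd h.1 (by decide)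
  · obtain ⟨z, ⟨u, w, hu, huw, hw⟩, hz⟩ := h.weakVisible ⟨_, _, .single .ctx, .announce, .refl⟩
    rcases weakBisim_conf_of_weakVisible_choice ⟨u, w, hy.trans hu, huw, hw⟩ with h | h
    · exact absurd h.1 (by decide)
    · exact hz.trans h.2.symm

theorem exists_ckSteps_ret_of_weakBisim
    (h : nfMachine.WeakBisim (.conf (.cont [] v) n) (.conf C' n)) :
    ∃ v', CKSteps C' (.cont [] v') ∧
      nfMachine.WeakBisim (.conf (.cont [.funI v] (.fvar n)) (n + 1))
        (.conf (.cont [.funI v'] (.fvar n)) (n + 1)) := by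
  obtain ⟨y, ⟨u, w, hu, hvisible, hw⟩, hy⟩ := h.weakVisible (TransSys.visible.weak .lam)
  obtain ⟨D', hD', rfl⟩ := exists_ckSteps_of_silents hu
  generalize hlam : lamF = a at hvisible
  cases hvisible with
  | lam => exact ⟨_, hD', hy.trans (weakBisim_of_silents hw).symm⟩
  | suc | zero => exact absurd hlam (by decide)

theorem exists_ckSteps_stuck_of_weakBisim
    (h : nfMachine.WeakBisim (.conf (.cont (.funI (.fvar f) :: π) v) n) (.conf C' n)) :
    ∃ π' v' y, CKSteps C' (.cont (.funI (.fvar f) :: π') v') ∧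
      nfMachine.Silents (.choice π' v' n) y ∧ nfMachine.WeakBisim (.choice π v n) y := by
  induction f generalizing C' with
  | zero =>
    obtain ⟨y, ⟨u, w, hu, hvisible, hw⟩, hy⟩ := h.weakVisible (TransSys.visible.weak .zero)
    obtain ⟨D', hD', rfl⟩ := exists_ckSteps_of_silents hu
    generalize hzero : zN = a at hvisible
    cases hvisible with
    | zero => exact ⟨_, _, y, hD', hw, hy⟩
    | lam | suc => exact absurd hzero (by decide)
  | succ f ih =>
    obtain ⟨y, ⟨u, w, hu, hvisible, hw⟩, hy⟩ := h.weakVisible (TransSys.visible.weak .suc)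
    obtain ⟨D', hD', rfl⟩ := exists_ckSteps_of_silents hu
    generalize hsuc : sucN = a at hvisible
    cases hvisible with
    | suc =>
      obtain ⟨π', v', z, hstuck, hz⟩ := ih (hy.trans (weakBisim_of_silents hw).symm)
      rcases hstuck.cases_head with heq | ⟨_, hstep, -⟩
      · cases heq
        exact ⟨_, _, z, hD', hz⟩
      · exact (not_ckStep_stuck hstep).elim
    | lam | zero => exact absurd hsuc (by decide)

/-- Weak bisimilarity of configurations after renaming their free variables below the counter.
The renaming is needed because normal-form bisimulations quantify over all fresh variables whereas
the machine always picks the value of its counter. -/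
def RenamedWeakBisim (C C' : CKConf) : Prop :=
  ∃ (σ : Equiv.Perm ℕ) (n : ℕ), (∀ f ∈ fvConf C ∪ fvConf C', σ f < n) ∧
    nfMachine.WeakBisim (.conf (C.rename σ) n) (.conf (C'.rename σ) n)

theorem exists_perm_extending_fresh {σ : Equiv.Perm ℕ} {S : Finset ℕ} (hσ : ∀ g ∈ S, σ g < n)
    (hf : f ∉ S) : ∃ τ : Equiv.Perm ℕ, τ f = n ∧ ∀ g ∈ S, τ g = σ g := by
  refine ⟨σ.trans (.swap (σ f) n), by simp, fun g hg => ?_⟩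
  have hgf : g ≠ f := fun hgf => hf (hgf ▸ hg)
  exact Equiv.swap_apply_of_ne_of_ne (σ.injective.ne hgf) (hσ g hg).ne

theorem renamedWeakBisim_cont {σ : Equiv.Perm ℕ} (hσ : ∀ g ∈ fvSt π ∪ fvSt π', σ g < n)
    (hf : f ∉ fvSt π ∪ fvSt π')
    (h : nfMachine.WeakBisim (.conf (.cont (π.map (.rename σ)) (.fvar n)) (n + 1))
      (.conf (.cont (π'.map (.rename σ)) (.fvar n)) (n + 1))) :
    RenamedWeakBisim (.cont π (.fvar f)) (.cont π' (.fvar f)) := by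
  obtain ⟨τ, rfl, hτ⟩ := exists_perm_extending_fresh hσ hf
  refine ⟨τ, τ f + 1, fun g hg => ?_, ?_⟩
  · by_cases hgf : g = f
    · simp [hgf]
    · have hgπ : g ∈ fvSt π ∪ fvSt π' := by simpa [fvConf, fvC, hgf] using hg
      exact Nat.lt_succ_of_lt (hτ g hgπ ▸ hσ g hgπ)
  · rw [Finset.forall_mem_union] at hτ
    simpa only [CKConf.rename, CTm.rename, map_rename_congr hτ.1, map_rename_congr hτ.2] using h

namespace RenamedWeakBisim

theorem symm (h : RenamedWeakBisim C C') : RenamedWeakBisim C' C := by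
  obtain ⟨σ, n, hσ, h⟩ := h
  exact ⟨σ, n, Finset.union_comm (fvConf C) _ ▸ hσ, h.symm⟩

theorem exists_ret (h : RenamedWeakBisim C C') (hC : CKSteps C (.cont [] v)) :
    ∃ v', CKSteps C' (.cont [] v') ∧ ∀ f, f ∉ fvC v ∪ fvC v' →
      RenamedWeakBisim (.cont [.funI v] (.fvar f)) (.cont [.funI v'] (.fvar f)) := by
  obtain ⟨σ, n, hσ, h⟩ := h
  obtain ⟨w, hC', hw⟩ :=
    exists_ckSteps_ret_of_weakBisim (((hC.rename σ).weakBisim n).symm.trans h)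
  obtain ⟨v', rfl⟩ := CTm.rename_surjective σ w
  have hv' : CKSteps C' (.cont [] v') := (ckSteps_rename_iff σ).1 hC'
  refine ⟨v', hv', fun f hf => ?_⟩
  rw [← fvSt_funI v, ← fvSt_funI v'] at hf
  exact renamedWeakBisim_cont (fun g hg => hσ g (fvSt_funI_union_subset hC hv' hg)) hf hw

theorem exists_stuck (h : RenamedWeakBisim C C')
    (hC : CKSteps C (.cont (.funI (.fvar f) :: π) v)) :
    ∃ π' v', CKSteps C' (.cont (.funI (.fvar f) :: π') v') ∧
      ∀ g, g ∉ fvC v ∪ fvC v' ∪ fvSt π ∪ fvSt π' →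
        RenamedWeakBisim (.cont [.funI v] (.fvar g)) (.cont [.funI v'] (.fvar g)) ∧
        RenamedWeakBisim (.cont π (.fvar g)) (.cont π' (.fvar g)) := by
  obtain ⟨σ, n, hσ, h⟩ := h
  obtain ⟨ρ, w, y, hC', hy, hchoice⟩ :=
    exists_ckSteps_stuck_of_weakBisim (((hC.rename σ).weakBisim n).symm.trans h)
  obtain ⟨π', rfl⟩ := (CItem.rename_surjective σ).list_map ρ
  obtain ⟨v', rfl⟩ := CTm.rename_surjective σ w
  have hstuck : CKSteps C' (.cont (.funI (.fvar f) :: π') v') := (ckSteps_rename_iff σ).1 hC'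
  obtain ⟨hval, hctx⟩ := weakBisim_conf_of_choice hy hchoice
  refine ⟨π', v', hstuck, fun g hg => ?_⟩
  rw [Finset.union_assoc, Finset.notMem_union] at hg
  rw [← fvSt_funI v, ← fvSt_funI v'] at hg
  exact ⟨renamedWeakBisim_cont (fun g hg => hσ g (fvSt_funI_union_subset hC hstuck hg)) hg.1 hval,
    renamedWeakBisim_cont (fun g hg => hσ g (fvSt_union_subset hC hstuck hg)) hg.2 hctx⟩

end RenamedWeakBisim

theorem isNFBisimV_renamedWeakBisim : IsNFBisimV RenamedWeakBisim :=
  ⟨fun _ _ => .symm, fun _ _ h => ⟨fun _ => h.exists_ret, fun _ _ _ => h.exists_stuck⟩⟩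

theorem nfBisimV_of_weakBisim (hfv : fvConf C ∪ fvConf C' ⊆ Finset.range n)
    (h : nfMachine.WeakBisim (.conf C n) (.conf C' n)) : NFBisimV C C' := by
  refine ⟨RenamedWeakBisim, isNFBisimV_renamedWeakBisim, 1, n,
    fun f hf => Finset.mem_range.1 (hfv hf), ?_⟩
  simpa only [Equiv.Perm.coe_one, CKConf.rename_id] using h

end WeakBisimToNFBisim

theorem nfBisimV_iff_weakBisim {C C' : CKConf} {n : ℕ}
    (hfv : fvConf C ∪ fvConf C' ⊆ Finset.range n) :
    NFBisimV C C' ↔ nfMachine.WeakBisim (.conf C n) (.conf C' n) :=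
  ⟨fun h => h.weakBisim hfv, nfBisimV_of_weakBisim hfv⟩

theorem nfBisimV_iff_barbedEquiv {t s : CTm} {n : ℕ} (hfv : ∀ f ∈ fvC t ∪ fvC s, f < n) :
    NFBisimV (.ev t []) (.ev s []) ↔ BarbedEquiv HSetV (trEvV t [] n) (trEvV s [] n) := by
  rw [barbedEquiv_trEvV_iff]
  exact nfBisimV_iff_weakBisim fun f hf => by simpa using hfv f (by simpa [fvConf, fvSt] using hf)

/-! ### Statement 17: full abstraction of HOcore w.r.t. call-by-value
normal-form bisimilarity -/

/-- `t ~nf s` iff there exists `n` greater than every free variable of `t` and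
`s` such that `[[<t | [] | n>_ev]]` and `[[<s | [] | n>_ev]]` are barbed
equivalent w.r.t. `H`. -/
theorem hocore_fully_abstract_cbv_nf (t s : CTm) :
    NFBisimV (.ev t []) (.ev s []) ↔
      ∃ n : ℕ, (∀ f ∈ fvC t ∪ fvC s, f < n) ∧
        BarbedEquiv HSetV (trEvV t [] n) (trEvV s [] n) := by
  refine ⟨fun h => ?_, fun ⟨n, hfv, h⟩ => (nfBisimV_iff_barbedEquiv hfv).2 h⟩
  have hfv : ∀ f ∈ fvC t ∪ fvC s, f < (fvC t ∪ fvC s).sup id + 1 := fun f hf =>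
    Nat.lt_succ_of_le (Finset.le_sup (f := id) hf)
  exact ⟨_, hfv, (nfBisimV_iff_barbedEquiv hfv).1 h⟩
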